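/- arXiv:2009.08447 — 14 statements merged into one kernel-verified Lean document; each statement's English description precedes it below -/
import Mathlib

section
/- Let m ≥ 1 and let y, y' ∈ Δᵐ with y_i > 0 for all i. Then Σ_{i=1}^m y'_i · log(y'_i / y_i) ≥ (1/2) · Σ_{i=1}^m (y_i − y'_i)² / ( (2/3)·y_i + (1/3)·y'_i ), with the convention 0·log 0 = 0. -/
/-!
With `f t = t log t + 1 - t`, each term satisfies `b log (b / a) + a - b = a f (b / a)`, and the
corrections `a - b` sum to zero on the simplex. So it suffices that
`f t ≥ (3 / 2) (t - 1)² / (t + 2)` for `t ≥ 0`. The difference of the two sides vanishes to first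
order at `1`, and its second derivative `1 / t - 27 / (t + 2)³` is nonnegative by Bernoulli's
inequality `t ≤ ((t + 2) / 3)³`, so it is convex with minimum value `0` at `1`.
-/

open InformationTheory Set

section SqSubDivAdd

variable {𝕜 : Type*} [NontriviallyNormedField 𝕜] (a : 𝕜) {b x : 𝕜}

theorem hasDerivAt_sq_sub_div_add (hx : x + b ≠ 0) :
    HasDerivAt (fun t ↦ (t - a) ^ 2 / (t + b)) (1 - ((a + b) / (x + b)) ^ 2) x := by
  have h_num : HasDerivAt (fun t ↦ (t - a) ^ 2) (2 * (x - a)) x := by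
    simpa using ((hasDerivAt_id' x).sub_const a).fun_pow 2
  refine (h_num.fun_div ((hasDerivAt_id' x).add_const b) hx).congr_deriv ?_
  field_simp
  ring

theorem hasDerivAt_one_sub_sq_div_add (hx : x + b ≠ 0) :
    HasDerivAt (fun t ↦ 1 - (a / (t + b)) ^ 2) (2 * a ^ 2 / (x + b) ^ 3) x := by
  have h_div : HasDerivAt (fun t ↦ a / (t + b)) (-a / (x + b) ^ 2) x := by
    simpa using (hasDerivAt_const x a).fun_div ((hasDerivAt_id' x).add_const b) hx
  have h_sq : HasDerivAt (fun t ↦ (a / (t + b)) ^ 2)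
      (2 * (a / (x + b)) * (-a / (x + b) ^ 2)) x := by
    simpa using h_div.fun_pow 2
  refine (h_sq.const_sub 1).congr_deriv ?_
  field_simp

end SqSubDivAdd

theorem hasDerivAt_klFun_sub_sq_div {t : ℝ} (ht : 0 < t) :
    HasDerivAt (fun t ↦ klFun t - 3 / 2 * ((t - 1) ^ 2 / (t + 2)))
      (Real.log t - 3 / 2 * (1 - (3 / (t + 2)) ^ 2)) t := by
  have h_sq := hasDerivAt_sq_sub_div_add 1 (by positivity : t + 2 ≠ 0)
  rw [show (1 + 2 : ℝ) = 3 by norm_num] at h_sq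
  exact (hasDerivAt_klFun ht.ne').sub (h_sq.const_mul _)

theorem le_add_two_div_three_pow_three {t : ℝ} (ht : 0 ≤ t) : t ≤ ((t + 2) / 3) ^ 3 := by
  have bernoulli := one_add_mul_le_pow (by linarith : -2 ≤ (t - 1) / 3) 3
  push_cast at bernoulli
  linear_combination bernoulli

theorem convexOn_klFun_sub_sq_div :
    ConvexOn ℝ (Ici 0) fun t ↦ klFun t - 3 / 2 * ((t - 1) ^ 2 / (t + 2)) := by
  have h_cont : ContinuousOn (fun t : ℝ ↦ klFun t - 3 / 2 * ((t - 1) ^ 2 / (t + 2))) (Ici 0) := by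
    refine continuous_klFun.continuousOn.sub (continuousOn_const.mul ?_)
    exact ContinuousOn.div (by fun_prop) (by fun_prop) fun t (ht : 0 ≤ t) ↦ by positivity
  refine convexOn_of_hasDerivWithinAt2_nonneg (convex_Ici 0) h_cont
    (f' := fun t ↦ Real.log t - 3 / 2 * (1 - (3 / (t + 2)) ^ 2))
    (f'' := fun t ↦ t⁻¹ - 3 / 2 * (2 * 3 ^ 2 / (t + 2) ^ 3)) ?_ ?_ ?_ <;>
    simp only [interior_Ici, mem_Ioi] <;> intro t ht
  · exact (hasDerivAt_klFun_sub_sq_div ht).hasDerivWithinAt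
  · exact ((Real.hasDerivAt_log ht.ne').sub ((hasDerivAt_one_sub_sq_div_add _
      (by positivity : t + 2 ≠ 0)).const_mul _)).hasDerivWithinAt
  · have h_inv := inv_anti₀ ht (le_add_two_div_three_pow_three ht.le)
    rw [← inv_pow, inv_div, div_pow] at h_inv
    linear_combination h_inv

theorem sq_sub_one_div_le_klFun {t : ℝ} (ht : 0 ≤ t) :
    3 / 2 * ((t - 1) ^ 2 / (t + 2)) ≤ klFun t := by
  have h_deriv := (hasDerivAt_klFun_sub_sq_div one_pos).hasDerivWithinAt.derivWithin
    (uniqueDiffWithinAt_Ioi 1)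
  have h_min := convexOn_klFun_sub_sq_div.isMinOn_of_rightDeriv_eq_zero (x := 1) (by simp)
    (h_deriv.trans (by norm_num))
  have h_le := isMinOn_iff.mp h_min t ht
  rw [klFun_one] at h_le
  linarith

theorem mul_klFun_div {a : ℝ} (ha : a ≠ 0) (b : ℝ) :
    a * klFun (b / a) = b * Real.log (b / a) + a - b := by
  rw [klFun_apply]
  field_simp

theorem half_sq_sub_div_le_mul_log_div {a b : ℝ} (ha : 0 < a) (hb : 0 ≤ b) :
    1 / 2 * ((a - b) ^ 2 / (2 / 3 * a + 1 / 3 * b)) ≤ b * Real.log (b / a) + a - b :=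
  calc 1 / 2 * ((a - b) ^ 2 / (2 / 3 * a + 1 / 3 * b))
      = a * (3 / 2 * ((b / a - 1) ^ 2 / (b / a + 2))) := by
        have h_den : 2 / 3 * a + 1 / 3 * b = a * (b / a + 2) / 3 := by field_simp; ring
        rw [h_den]
        field_simp
        ring
    _ ≤ a * klFun (b / a) := by gcongr; exact sq_sub_one_div_le_klFun (by positivity)
    _ = b * Real.log (b / a) + a - b := mul_klFun_div ha.ne' b

theorem kl_ge_half_weighted_sq_general {ι : Type*} (s : Finset ι) {y y' : ι → ℝ}
    (hy : ∀ i ∈ s, 0 < y i) (hy' : ∀ i ∈ s, 0 ≤ y' i) :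
    (1 / 2) * ∑ i ∈ s, (y i - y' i) ^ 2 / ((2 / 3) * y i + (1 / 3) * y' i)
      ≤ ∑ i ∈ s, y' i * Real.log (y' i / y i) + ∑ i ∈ s, y i - ∑ i ∈ s, y' i := by
  rw [Finset.mul_sum, ← Finset.sum_add_distrib, ← Finset.sum_sub_distrib]
  exact Finset.sum_le_sum fun i hi ↦ half_sq_sub_div_le_mul_log_div (hy i hi) (hy' i hi)

/-- For `y, y' ∈ Δᵐ` with `y` entrywise positive, the KL divergence
`∑ i, y'_i log(y'_i / y_i)` is at least `(1/2) ∑ i (y_i − y'_i)² / ((2/3) y_i + (1/3) y'_i)`. -/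
theorem kl_ge_half_weighted_sq (m : ℕ) (hm : 1 ≤ m) (y y' : Fin m → ℝ)
    (hy : y ∈ stdSimplex ℝ (Fin m)) (hy' : y' ∈ stdSimplex ℝ (Fin m))
    (hypos : ∀ i, 0 < y i) :
    (1 / 2) * ∑ i, (y i - y' i) ^ 2 / ((2 / 3) * y i + (1 / 3) * y' i)
      ≤ ∑ i, y' i * Real.log (y' i / y i) := by
  simpa only [hy.2, hy'.2, add_sub_cancel_right] using
    kl_ge_half_weighted_sq_general Finset.univ (fun i _ ↦ hypos i) fun i _ ↦ hy'.1 i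
end

section
/- Let β ≥ 0, let x ∈ Δⁿ, and let x' ∈ Δⁿ be a β-padding of x. Then Σ_{j=1}^n x'_j log x'_j − Σ_{j=1}^n x_j log x_j ≤ β·n/e + β·(1 + β), with the convention 0·log 0 = 0. -/
/-- `x'` is a `β`-padding of `x`: there is `x̃` with `x̃ ≥ x` entrywise,
`‖x̃ − x‖₁ ≤ β`, and `x' = x̃ / ‖x̃‖₁`. -/
def IsPadding {n : ℕ} (β : ℝ) (x x' : Fin n → ℝ) : Prop :=
  ∃ xt : Fin n → ℝ, (∀ j, x j ≤ xt j) ∧ (∑ j, |xt j - x j|) ≤ β ∧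
    ∀ j, x' j = xt j / ∑ k, |xt k|

/-!
Write `H` for the Shannon entropy. A padding dominates the original point up to a factor:
`x ≤ x̃ = ‖x̃‖₁ x' ≤ (1 + β) x'`. By Gibbs' inequality and `-log x' ≥ 0`,
`H x ≤ ∑ x (-log x') ≤ (1 + β) H x'`, so `H x - H x' ≤ β H x' ≤ β log n`, which is at most
`β n / e`.
-/

open Finset Real

lemma log_le_div_exp_one {x : ℝ} (hx : 0 ≤ x) : log x ≤ x / exp 1 := by
  rcases hx.eq_or_lt with rfl | hx
  · simp
  · rw [le_div_iff₀' (exp_pos 1)]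
    exact exp_one_mul_le_exp.trans_eq (exp_log hx)

lemma negMulLog_le_mul_neg_log_add_sub {a b : ℝ} (ha : 0 ≤ a) (hb : 0 ≤ b)
    (hab : b = 0 → a = 0) : negMulLog a ≤ a * -log b + (b - a) := by
  rcases ha.eq_or_lt with rfl | ha
  · simpa using hb
  have hb : 0 < b := hb.lt_of_ne' fun h ↦ ha.ne' (hab h)
  have hlog : log b - log a ≤ b / a - 1 := by
    simpa only [log_div hb.ne' ha.ne'] using log_le_sub_one_of_pos (div_pos hb ha)
  calc negMulLog a = a * -log b + a * (log b - log a) := by rw [negMulLog]; ring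
    _ ≤ a * -log b + a * (b / a - 1) := by gcongr
    _ = a * -log b + (b - a) := by field_simp

section FiniteEntropy

variable {ι : Type*} {s : Finset ι} {p q : ι → ℝ}

lemma sum_negMulLog_le_sum_mul_neg_log (hp : ∀ i ∈ s, 0 ≤ p i) (hq : ∀ i ∈ s, 0 ≤ q i)
    (hpq : ∀ i ∈ s, q i = 0 → p i = 0) (hsum : ∑ i ∈ s, q i ≤ ∑ i ∈ s, p i) :
    ∑ i ∈ s, negMulLog (p i) ≤ ∑ i ∈ s, p i * -log (q i) :=
  calc ∑ i ∈ s, negMulLog (p i)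
      ≤ ∑ i ∈ s, (p i * -log (q i) + (q i - p i)) := sum_le_sum fun i hi ↦
        negMulLog_le_mul_neg_log_add_sub (hp i hi) (hq i hi) (hpq i hi)
    _ = ∑ i ∈ s, p i * -log (q i) + (∑ i ∈ s, q i - ∑ i ∈ s, p i) := by
        rw [sum_add_distrib, sum_sub_distrib]
    _ ≤ ∑ i ∈ s, p i * -log (q i) := by linarith

lemma sum_negMulLog_le_log_card (hp : ∀ i ∈ s, 0 ≤ p i) (hsum : ∑ i ∈ s, p i = 1) :
    ∑ i ∈ s, negMulLog (p i) ≤ log #s :=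
  calc ∑ i ∈ s, negMulLog (p i) ≤ ∑ i ∈ s, p i * -log (#s : ℝ)⁻¹ := by
        refine sum_negMulLog_le_sum_mul_neg_log hp (fun _ _ ↦ by positivity) (fun i hi h ↦ ?_) ?_
        · exact absurd h (inv_ne_zero (Nat.cast_ne_zero.2 (card_ne_zero_of_mem hi)))
        · rw [hsum, sum_const, nsmul_eq_mul]
          exact mul_inv_le_one
    _ = log #s := by rw [← sum_mul, hsum, log_inv, neg_neg, one_mul]

lemma sum_negMulLog_le_mul_sum_negMulLog {c : ℝ} (hp : ∀ i ∈ s, 0 ≤ p i)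
    (hq₀ : ∀ i ∈ s, 0 ≤ q i) (hq₁ : ∀ i ∈ s, q i ≤ 1) (hpq : ∀ i ∈ s, p i ≤ c * q i)
    (hsum : ∑ i ∈ s, q i ≤ ∑ i ∈ s, p i) :
    ∑ i ∈ s, negMulLog (p i) ≤ c * ∑ i ∈ s, negMulLog (q i) :=
  calc ∑ i ∈ s, negMulLog (p i) ≤ ∑ i ∈ s, p i * -log (q i) :=
        sum_negMulLog_le_sum_mul_neg_log hp hq₀
          (fun i hi h ↦ (hp i hi).antisymm' (by simpa [h] using hpq i hi)) hsum
    _ ≤ ∑ i ∈ s, c * q i * -log (q i) := sum_le_sum fun i hi ↦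
        mul_le_mul_of_nonneg_right (hpq i hi)
          (neg_nonneg.2 (log_nonpos (hq₀ i hi) (hq₁ i hi)))
    _ = c * ∑ i ∈ s, negMulLog (q i) := by
        rw [mul_sum]
        exact sum_congr rfl fun i _ ↦ by rw [negMulLog]; ring

end FiniteEntropy

lemma IsPadding.le_one_add_mul {n : ℕ} {β : ℝ} {x x' : Fin n → ℝ} (hpad : IsPadding β x x')
    (hx : x ∈ stdSimplex ℝ (Fin n)) (j : Fin n) : x j ≤ (1 + β) * x' j := by
  obtain ⟨y, hxy, hβ, hx'⟩ := hpad
  have hy : ∀ k, 0 ≤ y k := fun k ↦ (hx.1 k).trans (hxy k)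
  have norm_eq : ∑ k, |y k| = 1 + ∑ k, |y k - x k| := by
    simp only [abs_of_nonneg (hy _), abs_of_nonneg (sub_nonneg.2 (hxy _)), sum_sub_distrib, hx.2,
      add_sub_cancel]
  have norm_pos : 0 < ∑ k, |y k| := by rw [norm_eq]; positivity
  calc x j ≤ y j := hxy j
    _ = (∑ k, |y k|) * x' j := by rw [hx', mul_div_cancel₀ _ norm_pos.ne']
    _ ≤ (1 + β) * x' j := by
        have : 0 ≤ x' j := hx' j ▸ div_nonneg (hy j) norm_pos.le
        gcongr
        linarith

theorem entropy_increase_of_padding_general {ι : Type*} [Fintype ι] {β : ℝ} {x x' : ι → ℝ}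
    (hx : x ∈ stdSimplex ℝ ι) (hx' : x' ∈ stdSimplex ℝ ι) (hle : ∀ j, x j ≤ (1 + β) * x' j) :
    (∑ j, x' j * log (x' j)) - ∑ j, x j * log (x j) ≤ β * log (Fintype.card ι) := by
  have hβ : 0 ≤ β := by
    have : ∑ j, x j ≤ (1 + β) * ∑ j, x' j := mul_sum univ x' _ ▸ sum_le_sum fun j _ ↦ hle j
    rw [hx.2, hx'.2] at this
    linarith
  have entropy_le : ∑ j, negMulLog (x j) ≤ (1 + β) * ∑ j, negMulLog (x' j) :=
    sum_negMulLog_le_mul_sum_negMulLog (fun j _ ↦ hx.1 j) (fun j _ ↦ hx'.1 j)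
      (fun j _ ↦ (mem_Icc_of_mem_stdSimplex hx' j).2) (fun j _ ↦ hle j) (hx'.2.trans hx.2.symm).le
  calc (∑ j, x' j * log (x' j)) - ∑ j, x j * log (x j)
      = ∑ j, negMulLog (x j) - ∑ j, negMulLog (x' j) := by
        simp only [negMulLog, neg_mul, sum_neg_distrib]; ring
    _ ≤ β * ∑ j, negMulLog (x' j) := by linarith
    _ ≤ β * log (Fintype.card ι) :=
        mul_le_mul_of_nonneg_left (sum_negMulLog_le_log_card (fun j _ ↦ hx'.1 j) hx'.2) hβ

/-- If `x' ∈ Δⁿ` is a `β`-padding of `x ∈ Δⁿ`, then the entropy increase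
`∑ x'_j log x'_j − ∑ x_j log x_j` is at most `βn/e + β(1+β)`. -/
theorem entropy_increase_of_padding (n : ℕ) (β : ℝ) (hβ : 0 ≤ β)
    (x x' : Fin n → ℝ)
    (hx : x ∈ stdSimplex ℝ (Fin n)) (hx' : x' ∈ stdSimplex ℝ (Fin n))
    (hpad : IsPadding β x x') :
    (∑ j, x' j * Real.log (x' j)) - ∑ j, x j * Real.log (x j)
      ≤ β * n / Real.exp 1 + β * (1 + β) :=
  calc (∑ j, x' j * log (x' j)) - ∑ j, x j * log (x j)
      ≤ β * log n := by
        simpa using entropy_increase_of_padding_general hx hx' (hpad.le_one_add_mul hx)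
    _ ≤ β * (n / exp 1) := by gcongr; exact log_le_div_exp_one n.cast_nonneg
    _ ≤ β * n / exp 1 + β * (1 + β) := by
        rw [← mul_div_assoc]
        exact le_add_of_nonneg_right (by positivity)
end

section
/- Let β ≥ 0, let x ∈ Δⁿ have strictly positive entries, and let x' ∈ Δⁿ be a β-padding of x (so x' also has strictly positive entries). Then for every u ∈ Δⁿ, Σ_{j=1}^n u_j · log(x_j / x'_j) ≤ β; equivalently, V_{x'}(u) − V_x(u) ≤ β, where V_z(u) = Σ_j u_j log(u_j/z_j). -/
namespace IsPadding

variable {n : ℕ} {β : ℝ} {x x' : Fin n → ℝ} {j : Fin n}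

theorem pos (h : IsPadding β x x') (hj : 0 < x j) : 0 < x' j := by
  obtain ⟨xt, hle, -, hx'⟩ := h
  have hxt : 0 < xt j := hj.trans_le (hle j)
  have hsum : 0 < ∑ k, |xt k| :=
    Finset.sum_pos' (fun k _ ↦ abs_nonneg (xt k)) ⟨j, Finset.mem_univ j, abs_pos.2 hxt.ne'⟩
  rw [hx' j]
  exact div_pos hxt hsum

theorem le_sum_abs_add_mul (h : IsPadding β x x') (hj : 0 ≤ x' j) :
    x j ≤ (∑ k, |x k| + β) * x' j := by
  obtain ⟨xt, hle, hdist, hx'⟩ := h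
  have hnorm : ∑ k, |xt k| ≤ ∑ k, |x k| + β := calc
    ∑ k, |xt k| ≤ ∑ k, (|x k| + |xt k - x k|) :=
      Finset.sum_le_sum fun k _ ↦ sub_le_iff_le_add'.1 (abs_sub_abs_le_abs_sub (xt k) (x k))
    _ = ∑ k, |x k| + ∑ k, |xt k - x k| := Finset.sum_add_distrib
    _ ≤ ∑ k, |x k| + β := by gcongr
  have hzero : ∑ k, |xt k| = 0 → xt j = 0 := fun hsum ↦
    abs_eq_zero.1 <|
      (Finset.sum_eq_zero_iff_of_nonneg fun k _ ↦ abs_nonneg (xt k)).1 hsum j (Finset.mem_univ j)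
  calc
    x j ≤ xt j := hle j
    _ = (∑ k, |xt k|) * x' j := by rw [hx' j, mul_div_cancel_of_imp' hzero]
    _ ≤ (∑ k, |x k| + β) * x' j := by gcongr

theorem log_div_le_log_sum_abs_add (h : IsPadding β x x') (hj : 0 < x j) :
    Real.log (x j / x' j) ≤ Real.log (∑ k, |x k| + β) := by
  have hj' : 0 < x' j := h.pos hj
  exact Real.log_le_log (div_pos hj hj') ((div_le_iff₀ hj').2 (h.le_sum_abs_add_mul hj'.le))

end IsPadding

/-- If `x ∈ Δⁿ` is entrywise positive and `x' ∈ Δⁿ` is a `β`-padding of `x`,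
then for every `u ∈ Δⁿ`, `∑ j, u_j log(x_j / x'_j) ≤ β`, i.e. `V_{x'}(u) − V_x(u) ≤ β`. -/
theorem padding_divergence_increase (n : ℕ) (β : ℝ) (hβ : 0 ≤ β)
    (x x' : Fin n → ℝ)
    (hx : x ∈ stdSimplex ℝ (Fin n)) (hx' : x' ∈ stdSimplex ℝ (Fin n))
    (hxpos : ∀ j, 0 < x j)
    (hpad : IsPadding β x x') :
    ∀ u ∈ stdSimplex ℝ (Fin n), ∑ j, u j * Real.log (x j / x' j) ≤ β := by
  intro u hu
  have hnorm : ∑ k, |x k| = 1 := by simp only [abs_of_pos (hxpos _), hx.2]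
  have hlog (j : Fin n) : Real.log (x j / x' j) ≤ β := calc
    Real.log (x j / x' j) ≤ Real.log (1 + β) :=
      hnorm ▸ hpad.log_div_le_log_sum_abs_add (hxpos j)
    _ ≤ β := by linarith [Real.log_le_sub_one_of_pos (by positivity : 0 < 1 + β)]
  exact (convex_Iic β).sum_mem (fun j _ ↦ hu.1 j) hu.2 fun j _ ↦ hlog j
end

section
/- Let β ≥ 0 and M ≥ 0; let x₀ ∈ Δⁿ satisfy |log (x₀)_j| ≤ M for every j (in particular x₀ is entrywise positive), let x ∈ Δⁿ, and let x' ∈ Δⁿ be a β-padding of x. Then V_{x₀}(x') − V_{x₀}(x) ≤ β·(2M + n/e + 1 + β), where V_{x₀}(v) = Σ_j v_j log(v_j/(x₀)_j) with the convention 0·log 0 = 0. -/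
/-! A padding moves `x` along the segment towards the normalized added mass `w`, by a fraction
`t ≤ β`. By convexity of `V = V_{x₀}` its increase is at most `t (V w - V x)`. On the simplex `V` is
at most `M`, because `v log v ≤ 0`, and at least `-log ∑ x₀`, by the log-sum inequality; this lower
bound is `0` when `x₀` is itself a distribution, so the increase is then at most `β M`. -/

section EntropyDivergence

variable {ι : Type*} [Fintype ι] {q p : ι → ℝ}

/-- The divergence `V_q(p) = ∑ j, p j * log (p j / q j)` of `p` from the reference point `q`; on the
simplex it is the entropy Bregman divergence. Neither argument is required to be normalized, and
`0 * log 0 = 0` holds automatically since `Real.log` is total. -/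
noncomputable def entropyDivergence (q p : ι → ℝ) : ℝ :=
  ∑ j, p j * Real.log (p j / q j)

lemma entropyDivergence_eq_sum_perspective (hq : ∀ j, 0 < q j) :
    entropyDivergence q p = ∑ j, q j * (p j / q j * Real.log (p j / q j)) :=
  Finset.sum_congr rfl fun j _ => by rw [← mul_assoc, mul_div_cancel₀ _ (hq j).ne']

lemma convexOn_entropyDivergence (hq : ∀ j, 0 < q j) :
    ConvexOn ℝ (Set.Ici 0) (entropyDivergence q) := by
  refine ⟨convex_Ici 0, fun p hp p' hp' a b ha hb hab => ?_⟩
  simp only [entropyDivergence_eq_sum_perspective hq, smul_eq_mul, Finset.mul_sum,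
    ← Finset.sum_add_distrib]
  refine Finset.sum_le_sum fun j _ => ?_
  have jensen := Real.convexOn_mul_log.2 (div_nonneg (hp j) (hq j).le)
    (div_nonneg (hp' j) (hq j).le) ha hb hab
  simp only [smul_eq_mul] at jensen
  calc q j * ((a • p + b • p') j / q j * Real.log ((a • p + b • p') j / q j))
      = q j * ((a * (p j / q j) + b * (p' j / q j)) *
          Real.log (a * (p j / q j) + b * (p' j / q j))) := by
        simp only [Pi.add_apply, Pi.smul_apply, smul_eq_mul, add_div, mul_div_assoc]
    _ ≤ q j * (a * (p j / q j * Real.log (p j / q j)) +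
          b * (p' j / q j * Real.log (p' j / q j))) :=
        mul_le_mul_of_nonneg_left jensen (hq j).le
    _ = a * (q j * (p j / q j * Real.log (p j / q j))) +
          b * (q j * (p' j / q j * Real.log (p' j / q j))) := by ring

lemma sum_mul_log_div_sum_le_entropyDivergence (hq : ∀ j, 0 < q j) (hp : ∀ j, 0 ≤ p j) :
    (∑ j, p j) * Real.log ((∑ j, p j) / ∑ j, q j) ≤ entropyDivergence q p := by
  rcases isEmpty_or_nonempty ι with _ | _
  · simp [entropyDivergence]
  have hQ : 0 < ∑ j, q j := Finset.sum_pos (fun j _ => hq j) Finset.univ_nonempty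
  have jensen := Real.convexOn_mul_log.map_centerMass_le (t := Finset.univ) (w := q)
    (p := fun j => p j / q j) (fun j _ => (hq j).le) hQ fun j _ => div_nonneg (hp j) (hq j).le
  have mean_ratio : ∑ j, q j * (p j / q j) = ∑ j, p j :=
    Finset.sum_congr rfl fun j _ => mul_div_cancel₀ _ (hq j).ne'
  simp only [Finset.centerMass, Function.comp_apply, smul_eq_mul, mean_ratio,
    ← entropyDivergence_eq_sum_perspective hq, inv_mul_eq_div] at jensen
  rwa [div_mul_eq_mul_div, div_le_div_iff_of_pos_right hQ] at jensen

lemma neg_log_sum_le_entropyDivergence (hq : ∀ j, 0 < q j) (hp : p ∈ stdSimplex ℝ ι) :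
    -Real.log (∑ j, q j) ≤ entropyDivergence q p := by
  simpa [hp.2] using sum_mul_log_div_sum_le_entropyDivergence hq hp.1

lemma entropyDivergence_le_of_neg_log_le {M : ℝ} (hq : ∀ j, 0 < q j)
    (hM : ∀ j, -Real.log (q j) ≤ M) (hp : p ∈ stdSimplex ℝ ι) :
    entropyDivergence q p ≤ M := by
  have term_le (j : ι) : p j * Real.log (p j / q j) ≤ p j * M := by
    rcases (hp.1 j).eq_or_lt with hj | hj
    · simp [← hj]
    have hlog : Real.log (p j) ≤ 0 := Real.log_nonpos hj.le (mem_Icc_of_mem_stdSimplex hp j).2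
    rw [Real.log_div hj.ne' (hq j).ne']
    exact mul_le_mul_of_nonneg_left (by linarith [hM j]) hj.le
  calc entropyDivergence q p ≤ ∑ j, p j * M := Finset.sum_le_sum fun j _ => term_le j
    _ = M := by rw [← Finset.sum_mul, hp.2, one_mul]

end EntropyDivergence

section Padding

variable {n : ℕ} {β : ℝ} {x x' : Fin n → ℝ}

lemma IsPadding.exists_eq_inv_smul_add (hx : x ∈ stdSimplex ℝ (Fin n)) (hpad : IsPadding β x x') :
    ∃ r : Fin n → ℝ, (∀ j, 0 ≤ r j) ∧ ∑ j, r j ≤ β ∧ x' = (1 + ∑ j, r j)⁻¹ • (x + r) := by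
  obtain ⟨y, hxy, hdist, hx'⟩ := hpad
  have hr (j : Fin n) : 0 ≤ y j - x j := sub_nonneg.2 (hxy j)
  have norm_y : ∑ k, |y k| = 1 + ∑ k, (y k - x k) := by
    simp only [Finset.sum_sub_distrib, hx.2, add_sub_cancel]
    exact Finset.sum_congr rfl fun k _ => abs_of_nonneg ((hx.1 k).trans (hxy k))
  refine ⟨y - x, hr, by simpa only [abs_of_nonneg (hr _), Pi.sub_apply] using hdist,
    funext fun j => ?_⟩
  simp only [hx', norm_y, Pi.smul_apply, Pi.sub_apply, smul_eq_mul, add_sub_cancel,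
    div_eq_inv_mul]

lemma IsPadding.exists_eq_convex_combination (hx : x ∈ stdSimplex ℝ (Fin n))
    (hpad : IsPadding β x x') :
    ∃ t ∈ Set.Icc (0 : ℝ) 1, t ≤ β ∧ ∃ w ∈ stdSimplex ℝ (Fin n), x' = (1 - t) • x + t • w := by
  obtain ⟨r, hr, hrβ, rfl⟩ := hpad.exists_eq_inv_smul_add hx
  have hR : 0 ≤ ∑ j, r j := Finset.sum_nonneg fun j _ => hr j
  rcases hR.eq_or_lt with hR0 | hRpos
  · have r_eq_zero : r = 0 := funext fun j =>
      (Finset.sum_eq_zero_iff_of_nonneg fun k _ => hr k).1 hR0.symm j (Finset.mem_univ j)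
    exact ⟨0, by simp, hR0.trans_le hrβ, x, hx, by simp [r_eq_zero]⟩
  set R := ∑ j, r j with R_def
  refine ⟨R / (1 + R), ⟨by positivity, div_le_one_of_le₀ (by linarith) (by positivity)⟩,
    (div_le_self hR (by linarith)).trans hrβ, R⁻¹ • r, ⟨fun j => ?_, ?_⟩, ?_⟩
  · exact mul_nonneg (inv_nonneg.2 hR) (hr j)
  · simp only [Pi.smul_apply, smul_eq_mul, ← Finset.mul_sum, ← R_def, inv_mul_cancel₀ hRpos.ne']
  · ext j
    simp only [Pi.smul_apply, Pi.add_apply, smul_eq_mul]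
    field_simp
    ring

theorem padding_divergence_from_reference_general {M : ℝ} {x₀ : Fin n → ℝ}
    (hx₀pos : ∀ j, 0 < x₀ j) (hx₀log : ∀ j, -Real.log (x₀ j) ≤ M)
    (hx : x ∈ stdSimplex ℝ (Fin n)) (hpad : IsPadding β x x') :
    entropyDivergence x₀ x' - entropyDivergence x₀ x ≤ β * (M + Real.log (∑ j, x₀ j)) := by
  obtain ⟨t, ⟨ht0, ht1⟩, htβ, w, hw, rfl⟩ := hpad.exists_eq_convex_combination hx
  have convexity := (convexOn_entropyDivergence hx₀pos).2 hx.1 hw.1 (sub_nonneg.2 ht1) ht0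
    (sub_add_cancel 1 t)
  have lower := neg_log_sum_le_entropyDivergence hx₀pos hx
  have upper_x := entropyDivergence_le_of_neg_log_le hx₀pos hx₀log hx
  have upper_w := entropyDivergence_le_of_neg_log_le hx₀pos hx₀log hw
  simp only [smul_eq_mul] at convexity
  calc entropyDivergence x₀ ((1 - t) • x + t • w) - entropyDivergence x₀ x
      ≤ t * (entropyDivergence x₀ w - entropyDivergence x₀ x) := by linarith
    _ ≤ t * (M + Real.log (∑ j, x₀ j)) := mul_le_mul_of_nonneg_left (by linarith) ht0
    _ ≤ β * (M + Real.log (∑ j, x₀ j)) := mul_le_mul_of_nonneg_right htβ (by linarith)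

end Padding

/-- If `x₀ ∈ Δⁿ` satisfies `|log (x₀)_j| ≤ M` for all `j` (so `x₀` entrywise
positive), `x ∈ Δⁿ`, and `x' ∈ Δⁿ` is a `β`-padding of `x`, then
`V_{x₀}(x') − V_{x₀}(x) ≤ β (2M + n/e + 1 + β)`. -/
theorem padding_divergence_from_reference (n : ℕ) (β M : ℝ) (hβ : 0 ≤ β) (hM : 0 ≤ M)
    (x₀ x x' : Fin n → ℝ)
    (hx₀ : x₀ ∈ stdSimplex ℝ (Fin n))
    (hx₀pos : ∀ j, 0 < x₀ j)
    (hx₀log : ∀ j, |Real.log (x₀ j)| ≤ M)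
    (hx : x ∈ stdSimplex ℝ (Fin n)) (hx' : x' ∈ stdSimplex ℝ (Fin n))
    (hpad : IsPadding β x x') :
    (∑ j, x' j * Real.log (x' j / x₀ j)) - ∑ j, x j * Real.log (x j / x₀ j)
      ≤ β * (2 * M + n / Real.exp 1 + 1 + β) := by
  refine (padding_divergence_from_reference_general hx₀pos
    (fun j => (neg_le_abs _).trans (hx₀log j)) hx hpad).trans (mul_le_mul_of_nonneg_left ?_ hβ)
  rw [hx₀.2, Real.log_one]
  linarith [show 0 ≤ n / Real.exp 1 by positivity]
end

section
/- Let δ > 0 and let x' ∈ Δⁿ have strictly positive entries. Define x ∈ Δⁿ (the truncation of x' at level δ) by x_j = max(x'_j, δ) / Σ_{k=1}^n max(x'_k, δ). Then for every u ∈ Δⁿ, Σ_{j=1}^n u_j · log(x'_j / x_j) ≤ δ·n; equivalently, V_x(u) − V_{x'}(u) ≤ δ·n, where V_z(u) = Σ_j u_j log(u_j/z_j). -/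
/-!
Taking the maximum with `δ` only raises entries, so after dividing by `S = ∑ₖ max (x'ₖ, δ)` every
ratio `x'ⱼ / xⱼ` is at most `S`. Hence the `u`-average of the `log (x'ⱼ / xⱼ)` is at most
`log S ≤ S - 1`, and `S ≤ ∑ₖ (x'ₖ + δ)`.
-/

section Truncate

variable {ι : Type*} [Fintype ι] {x u : ι → ℝ} {δ : ℝ}

/-- The truncation of a vector at level `δ`: its entrywise maximum with `δ`, rescaled to have sum
one (and the junk value `0` if that maximum sums to zero). -/
noncomputable def truncate (x : ι → ℝ) (δ : ℝ) (j : ι) : ℝ :=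
  max (x j) δ / ∑ k, max (x k) δ

lemma sum_max_le_sum_add_mul_card (hx : ∀ j, 0 ≤ x j) (hδ : 0 ≤ δ) :
    ∑ j, max (x j) δ ≤ ∑ j, x j + δ * Fintype.card ι :=
  calc ∑ j, max (x j) δ ≤ ∑ j, (x j + δ) :=
        Finset.sum_le_sum fun j _ => max_le_add_of_nonneg (hx j) hδ
    _ = ∑ j, x j + δ * Fintype.card ι := by
        rw [Finset.sum_add_distrib, Finset.sum_const, Finset.card_univ, nsmul_eq_mul, mul_comm]

lemma sum_max_pos [Nonempty ι] (hx : ∀ j, 0 < x j) (δ : ℝ) : 0 < ∑ j, max (x j) δ :=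
  Finset.sum_pos (fun j _ => lt_max_of_lt_left (hx j)) Finset.univ_nonempty

lemma truncate_pos (hx : ∀ j, 0 < x j) (δ : ℝ) (j : ι) : 0 < truncate x δ j :=
  have : Nonempty ι := ⟨j⟩
  div_pos (lt_max_of_lt_left (hx j)) (sum_max_pos hx δ)

lemma div_truncate_le_sum_max (hx : ∀ j, 0 < x j) (δ : ℝ) (j : ι) :
    x j / truncate x δ j ≤ ∑ k, max (x k) δ := by
  have : Nonempty ι := ⟨j⟩
  rw [div_le_iff₀ (truncate_pos hx δ j), truncate, mul_div_cancel₀ _ (sum_max_pos hx δ).ne']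
  exact le_max_left _ _

lemma sum_mul_log_div_truncate_le_log (hx : ∀ j, 0 < x j) (δ : ℝ) (hu : u ∈ stdSimplex ℝ ι) :
    ∑ j, u j * Real.log (x j / truncate x δ j) ≤ Real.log (∑ k, max (x k) δ) :=
  (convex_Iic (Real.log (∑ k, max (x k) δ))).sum_mem (fun j _ => hu.1 j) hu.2 fun j _ =>
    Real.log_le_log (div_pos (hx j) (truncate_pos hx δ j)) (div_truncate_le_sum_max hx δ j)

theorem truncate_divergence_increase_general (hx : ∀ j, 0 < x j) (hδ : 0 ≤ δ)
    (hu : u ∈ stdSimplex ℝ ι) :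
    ∑ j, u j * Real.log (x j / truncate x δ j) ≤ ∑ j, x j + δ * Fintype.card ι - 1 := by
  have : Nonempty ι := Finset.univ_nonempty_iff.mp <|
    Finset.nonempty_of_sum_ne_zero (hu.2.trans_ne one_ne_zero)
  calc ∑ j, u j * Real.log (x j / truncate x δ j)
      ≤ Real.log (∑ k, max (x k) δ) := sum_mul_log_div_truncate_le_log hx δ hu
    _ ≤ ∑ k, max (x k) δ - 1 := Real.log_le_sub_one_of_pos (sum_max_pos hx δ)
    _ ≤ ∑ j, x j + δ * Fintype.card ι - 1 :=
        sub_le_sub_right (sum_max_le_sum_add_mul_card (fun j => (hx j).le) hδ) 1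

end Truncate

/-- Let `x ∈ Δⁿ` be the truncation at level `δ > 0` of an entrywise positive
`x' ∈ Δⁿ`, i.e. `x_j = max(x'_j, δ) / ∑ₖ max(x'_k, δ)`.  Then for every `u ∈ Δⁿ`,
`∑ j, u_j log(x'_j / x_j) ≤ δ n`, i.e. `V_x(u) − V_{x'}(u) ≤ δ n`. -/
theorem truncate_divergence_increase (n : ℕ) (δ : ℝ) (hδ : 0 < δ)
    (x' x : Fin n → ℝ)
    (hx' : x' ∈ stdSimplex ℝ (Fin n)) (hx'pos : ∀ j, 0 < x' j)
    (hx : ∀ j, x j = max (x' j) δ / ∑ k, max (x' k) δ) :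
    ∀ u ∈ stdSimplex ℝ (Fin n), ∑ j, u j * Real.log (x' j / x j) ≤ δ * n := by
  intro u hu
  obtain rfl : x = truncate x' δ := funext hx
  simpa [hx'.2] using truncate_divergence_increase_general hx'pos hδ.le hu
end

section
/- Let δ⁻, δ⁺ ∈ ℝⁿ and 0 < ρ ≤ 1 satisfy (δ⁺)_i = max( (δ⁻)_i , max_{j} (δ⁻)_j + log ρ ) for every i ∈ {1,…,n}. Then exp(δ⁺)/‖exp(δ⁺)‖₁ is a ρ·n-padding of exp(δ⁻)/‖exp(δ⁻)‖₁, where exp is applied entrywise. -/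
/-- The padded vector is `v / ∑ u`, whose normalization is that of `v`. -/
theorem isPadding_div_sum_of_le {n : ℕ} {β : ℝ} {u v : Fin n → ℝ}
    (hu : 0 < ∑ k, u k) (hv : ∀ j, 0 ≤ v j) (huv : ∀ j, u j ≤ v j)
    (hβ : ∑ j, (v j - u j) ≤ β * ∑ k, u k) :
    IsPadding β (fun j => u j / ∑ k, u k) (fun j => v j / ∑ k, v k) := by
  refine ⟨fun j => v j / ∑ k, u k, fun j => ?_, ?_, fun j => ?_⟩
  · exact div_le_div_of_nonneg_right (huv j) hu.le
  · have abs_diff (j : Fin n) :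
        |v j / ∑ k, u k - u j / ∑ k, u k| = (v j - u j) / ∑ k, u k := by
      rw [← sub_div, abs_of_nonneg (div_nonneg (sub_nonneg.2 (huv j)) hu.le)]
    simp only [abs_diff]
    rwa [← Finset.sum_div, div_le_iff₀ hu]
  · have abs_entry (k : Fin n) : |v k / ∑ i, u i| = v k / ∑ i, u i :=
      abs_of_nonneg (div_nonneg (hv k) hu.le)
    simp only [abs_entry]
    rw [← Finset.sum_div, div_div_div_cancel_right₀ hu.ne']

theorem exp_sup'_le_sum_exp {ι : Type*} {s : Finset ι} (hs : s.Nonempty) (f : ι → ℝ) :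
    Real.exp (s.sup' hs f) ≤ ∑ i ∈ s, Real.exp (f i) := by
  obtain ⟨m, hm, hsup⟩ := s.exists_mem_eq_sup' hs f
  rw [hsup]
  exact Finset.single_le_sum (f := fun i => Real.exp (f i))
    (fun i _ => (Real.exp_pos (f i)).le) hm

theorem exp_max_add_log_le {ρ : ℝ} (hρ : 0 < ρ) (a b : ℝ) :
    Real.exp (max a (b + Real.log ρ)) ≤ Real.exp a + ρ * Real.exp b := by
  rw [Real.exp_monotone.map_max, Real.exp_add, Real.exp_log hρ, mul_comm]
  exact max_le_add_of_nonneg (Real.exp_pos a).le (by positivity)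

theorem raise_small_entries_padding_general (n : ℕ) (hn : 0 < n)
    (δm δp : Fin n → ℝ) (ρ : ℝ) (hρ : 0 < ρ)
    (hδp : ∀ i, δp i =
      max (δm i) (Finset.univ.sup' ⟨⟨0, hn⟩, Finset.mem_univ _⟩ δm + Real.log ρ)) :
    IsPadding (ρ * n)
      (fun i => Real.exp (δm i) / ∑ k, Real.exp (δm k))
      (fun i => Real.exp (δp i) / ∑ k, Real.exp (δp k)) := by
  have hne : (Finset.univ : Finset (Fin n)).Nonempty := ⟨⟨0, hn⟩, Finset.mem_univ _⟩
  have raise_le (i : Fin n) :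
      Real.exp (δp i) - Real.exp (δm i) ≤ ρ * Real.exp (Finset.univ.sup' hne δm) := by
    rw [sub_le_iff_le_add', hδp i]
    exact exp_max_add_log_le hρ _ _
  refine isPadding_div_sum_of_le (Finset.sum_pos (fun i _ => Real.exp_pos (δm i)) hne)
    (fun i => (Real.exp_pos (δp i)).le)
    (fun i => Real.exp_le_exp.2 ((le_max_left _ _).trans_eq (hδp i).symm)) ?_
  calc ∑ i, (Real.exp (δp i) - Real.exp (δm i))
      ≤ ∑ _i : Fin n, ρ * Real.exp (Finset.univ.sup' hne δm) :=
        Finset.sum_le_sum fun i _ => raise_le i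
    _ = ρ * n * Real.exp (Finset.univ.sup' hne δm) := by
        rw [Fin.sum_const, nsmul_eq_mul]
        ring
    _ ≤ ρ * n * ∑ i, Real.exp (δm i) := by
        gcongr
        exact exp_sup'_le_sum_exp hne δm

/-- If `δ⁺_i = max(δ⁻_i, maxⱼ δ⁻_j + log ρ)` for all `i` and `0 < ρ ≤ 1`,
then `exp(δ⁺)/‖exp(δ⁺)‖₁` is a `ρ·n`-padding of `exp(δ⁻)/‖exp(δ⁻)‖₁`. -/
theorem raise_small_entries_padding (n : ℕ) (hn : 0 < n)
    (δm δp : Fin n → ℝ) (ρ : ℝ) (hρ0 : 0 < ρ) (hρ1 : ρ ≤ 1)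
    (hδp : ∀ i, δp i =
      max (δm i) (Finset.univ.sup' ⟨⟨0, hn⟩, Finset.mem_univ _⟩ δm + Real.log ρ)) :
    IsPadding (ρ * n)
      (fun i => Real.exp (δm i) / ∑ k, Real.exp (δm k))
      (fun i => Real.exp (δp i) / ∑ k, Real.exp (δp k)) :=
  raise_small_entries_padding_general n hn δm δp ρ hρ0 hδp
end

section
/- Let 0 < ε ≤ 1/10, let S₁, …, S_K be pairwise disjoint subsets of {1,…,n} whose union is {1,…,n}, and for each k ∈ {1,…,K} let x_k, x̂_k ∈ ℝⁿ be nonnegative vectors supported on S_k with Σ_j (x_k)_j = Σ_j (x̂_k)_j = 1, such that x̂_k is an ε-padding of x_k. Suppose positive scalars ν_k, ν̂_k (k = 1,…,K) satisfy (1 − ε)·ν_k ≤ ν̂_k ≤ (1 + ε)·ν_k for all k, and set N = Σ_k ν_k and N̂ = Σ_k ν̂_k. Then x̂ := Σ_{k=1}^K (ν̂_k/N̂)·x̂_k is a 10ε-padding of x := Σ_{k=1}^K (ν_k/N)·x_k. -/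
/- A `β`-padding of a probability vector `x` is exactly a probability vector dominating `x` up
to the factor `1 + β`: the normalizer of the witness lies between `1` and `1 + β`, and conversely
`(1 + β) • x'` is a witness. Domination factors multiply when mixtures are formed. Here the
components contribute `1 + ε` and the normalized weights `(1 + ε) / (1 - ε)`, so the mixture is a
padding with parameter `(1 + ε)² / (1 - ε) - 1 = ε (3 + ε) / (1 - ε)`. -/

section Normalization

open Finset

variable {ι 𝕜 : Type*} [Fintype ι] [Field 𝕜] [LinearOrder 𝕜] [IsStrictOrderedRing 𝕜]

theorem div_sum_mem_stdSimplex {w : ι → 𝕜} (hw : ∀ i, 0 ≤ w i) (hpos : 0 < ∑ i, w i) :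
    (fun i => w i / ∑ l, w l) ∈ stdSimplex 𝕜 ι :=
  ⟨fun i => div_nonneg (hw i) hpos.le, by rw [← sum_div, div_self hpos.ne']⟩

theorem div_sum_le_mul_div_sum {a b : 𝕜} {w w' : ι → 𝕜} (ha : 0 < a) (hw : ∀ i, 0 ≤ w i)
    (hpos : 0 < ∑ i, w i) (hlow : ∀ i, a * w i ≤ w' i) (hhigh : ∀ i, w' i ≤ b * w i) (i : ι) :
    w i / ∑ l, w l ≤ b / a * (w' i / ∑ l, w' l) := by
  have hsum_low : a * ∑ l, w l ≤ ∑ l, w' l :=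
    (mul_sum _ _ _).trans_le (sum_le_sum fun l _ => hlow l)
  have hsum_high : ∑ l, w' l ≤ b * ∑ l, w l :=
    (sum_le_sum fun l _ => hhigh l).trans_eq (mul_sum _ _ _).symm
  have hpos' : 0 < ∑ l, w' l := (mul_pos ha hpos).trans_le hsum_low
  rw [div_mul_div_comm, div_le_div_iff₀ hpos (mul_pos ha hpos')]
  calc w i * (a * ∑ l, w' l) = (a * w i) * ∑ l, w' l := by ring
    _ ≤ w' i * (b * ∑ l, w l) :=
      mul_le_mul (hlow i) hsum_high hpos'.le ((mul_nonneg ha.le (hw i)).trans (hlow i))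
    _ = b * w' i * ∑ l, w l := by ring

end Normalization

namespace IsPadding

open Finset

variable {n : ℕ} {β γ : ℝ} {x x' : Fin n → ℝ}

theorem mono (h : IsPadding β x x') (hβγ : β ≤ γ) : IsPadding γ x x' := by
  obtain ⟨xt, hle, hβ, hx'⟩ := h
  exact ⟨xt, hle, hβ.trans hβγ, hx'⟩

theorem mem_stdSimplex (h : IsPadding β x x') (hx : x ∈ stdSimplex ℝ (Fin n)) :
    x' ∈ stdSimplex ℝ (Fin n) := by
  obtain ⟨xt, hle, -, hx'⟩ := h
  have hxt : ∀ j, 0 ≤ xt j := fun j => (hx.1 j).trans (hle j)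
  have hpos : 0 < ∑ j, xt j := (hx.2 ▸ one_pos).trans_le (sum_le_sum fun j _ => hle j)
  simp only [abs_of_nonneg (hxt _)] at hx'
  rw [funext hx']
  exact div_sum_mem_stdSimplex hxt hpos

theorem le_smul (h : IsPadding β x x') (hx : x ∈ stdSimplex ℝ (Fin n)) :
    x ≤ (1 + β) • x' := by
  have hx'_nonneg := (h.mem_stdSimplex hx).1
  obtain ⟨xt, hle, hβ, hx'⟩ := h
  have hxt : ∀ j, 0 ≤ xt j := fun j => (hx.1 j).trans (hle j)
  have hone_le : 1 ≤ ∑ j, xt j := hx.2 ▸ sum_le_sum fun j _ => hle j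
  have hsum_le : ∑ j, xt j ≤ 1 + β := by
    simp only [abs_of_nonneg (sub_nonneg.2 (hle _)), sum_sub_distrib, hx.2] at hβ
    linarith
  simp only [abs_of_nonneg (hxt _)] at hx'
  intro j
  calc x j ≤ xt j := hle j
    _ = (∑ l, xt l) * x' j := by rw [hx' j, mul_div_cancel₀ _ (one_pos.trans_le hone_le).ne']
    _ ≤ (1 + β) * x' j := mul_le_mul_of_nonneg_right hsum_le (hx'_nonneg j)

theorem of_le_smul (hx : x ∈ stdSimplex ℝ (Fin n)) (hx' : x' ∈ stdSimplex ℝ (Fin n))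
    (hle : x ≤ (1 + β) • x') : IsPadding β x x' := by
  have hsum : ∑ j, ((1 + β) • x') j = 1 + β := by
    simp only [Pi.smul_apply, smul_eq_mul, ← mul_sum, hx'.2, mul_one]
  have hpos : 0 < 1 + β := by
    rw [← hsum]
    exact (hx.2 ▸ one_pos).trans_le (sum_le_sum fun j _ => hle j)
  have hnonneg : ∀ j, 0 ≤ ((1 + β) • x') j := fun j => (hx.1 j).trans (hle j)
  refine ⟨(1 + β) • x', hle, ?_, fun j => ?_⟩
  · simp only [abs_of_nonneg (sub_nonneg.2 (hle _)), sum_sub_distrib, hsum, hx.2,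
      add_sub_cancel_left, le_refl]
  · simp only [abs_of_nonneg (hnonneg _), hsum]
    exact (mul_div_cancel_left₀ _ hpos.ne').symm

theorem sum_smul {ι : Type*} [Fintype ι] {a : ℝ} {p p' : ι → ℝ} {x x' : ι → Fin n → ℝ}
    (hp : p ∈ stdSimplex ℝ ι) (hp' : p' ∈ stdSimplex ℝ ι) (hpp' : p ≤ a • p')
    (hx : ∀ k, x k ∈ stdSimplex ℝ (Fin n)) (h : ∀ k, IsPadding β (x k) (x' k)) :
    IsPadding (a * (1 + β) - 1) (∑ k, p k • x k) (∑ k, p' k • x' k) := by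
  have hx' : ∀ k, x' k ∈ stdSimplex ℝ (Fin n) := fun k => (h k).mem_stdSimplex (hx k)
  refine of_le_smul
    ((convex_stdSimplex ℝ (Fin n)).sum_mem (fun k _ => hp.1 k) hp.2 fun k _ => hx k)
    ((convex_stdSimplex ℝ (Fin n)).sum_mem (fun k _ => hp'.1 k) hp'.2 fun k _ => hx' k) ?_
  rw [add_sub_cancel, smul_sum]
  refine sum_le_sum fun k _ j => ?_
  have hxj : x k j ≤ (1 + β) * x' k j := (h k).le_smul (hx k) j
  calc p k * x k j ≤ (a * p' k) * ((1 + β) * x' k j) :=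
        mul_le_mul (hpp' k) hxj ((hx k).1 j) ((hp.1 k).trans (hpp' k))
    _ = a * (1 + β) * (p' k * x' k j) := by ring

end IsPadding

theorem combine_paddings_general {n : ℕ} {ι : Type*} [Fintype ι] {ε : ℝ} (hε : ε < 1)
    {x xhat : ι → Fin n → ℝ} (hx : ∀ k, x k ∈ stdSimplex ℝ (Fin n))
    (hpad : ∀ k, IsPadding ε (x k) (xhat k))
    {ν νhat : ι → ℝ} (hν : ∀ k, 0 ≤ ν k) (hN : 0 < ∑ k, ν k)
    (hlow : ∀ k, (1 - ε) * ν k ≤ νhat k) (hhigh : ∀ k, νhat k ≤ (1 + ε) * ν k) :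
    IsPadding (ε * (3 + ε) / (1 - ε))
      (∑ k, (ν k / ∑ l, ν l) • x k) (∑ k, (νhat k / ∑ l, νhat l) • xhat k) := by
  have hε' : 0 < 1 - ε := sub_pos.2 hε
  have hνhat : ∀ k, 0 ≤ νhat k := fun k => (mul_nonneg hε'.le (hν k)).trans (hlow k)
  have hNhat : 0 < ∑ k, νhat k := (mul_pos hε' hN).trans_le <|
    (Finset.mul_sum _ _ _).trans_le (Finset.sum_le_sum fun k _ => hlow k)
  have hweights := div_sum_le_mul_div_sum hε' hν hN hlow hhigh
  have hfactor : (1 + ε) / (1 - ε) * (1 + ε) - 1 = ε * (3 + ε) / (1 - ε) := by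
    field_simp
    ring
  rw [← hfactor]
  exact IsPadding.sum_smul (div_sum_mem_stdSimplex hν hN) (div_sum_mem_stdSimplex hνhat hNhat)
    hweights hx hpad

/-- Combining per-block `ε`-paddings `x̂_k` of `x_k` (supported on the parts
`S_k` of a partition of `[n]`) with multiplicatively `(1 ± ε)`-accurate weights `ν̂_k ≈ ν_k`
produces a `10ε`-padding `x̂ = ∑ₖ (ν̂ₖ/N̂) x̂ₖ` of `x = ∑ₖ (νₖ/N) xₖ`. -/
theorem combine_paddings (n K : ℕ) (ε : ℝ) (hε0 : 0 < ε) (hε : ε ≤ 1 / 10)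
    (S : Fin K → Finset (Fin n))
    (hdisj : ∀ k l, k ≠ l → Disjoint (S k) (S l))
    (hcover : Finset.univ.biUnion S = (Finset.univ : Finset (Fin n)))
    (x xhat : Fin K → Fin n → ℝ)
    (hxnn : ∀ k j, 0 ≤ x k j) (hxhatnn : ∀ k j, 0 ≤ xhat k j)
    (hxsupp : ∀ k, ∀ j ∉ S k, x k j = 0)
    (hxhatsupp : ∀ k, ∀ j ∉ S k, xhat k j = 0)
    (hxsum : ∀ k, ∑ j, x k j = 1) (hxhatsum : ∀ k, ∑ j, xhat k j = 1)
    (hpad : ∀ k, IsPadding ε (x k) (xhat k))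
    (ν νhat : Fin K → ℝ) (hν : ∀ k, 0 < ν k) (hνhat : ∀ k, 0 < νhat k)
    (hlow : ∀ k, (1 - ε) * ν k ≤ νhat k) (hhigh : ∀ k, νhat k ≤ (1 + ε) * ν k) :
    IsPadding (10 * ε)
      (fun j => ∑ k, (ν k / ∑ l, ν l) * x k j)
      (fun j => ∑ k, (νhat k / ∑ l, νhat l) * xhat k j) := by
  rcases isEmpty_or_nonempty (Fin K) with _ | _
  · exact ⟨0, by simp, by simpa using hε0.le, by simp⟩
  have hconst : ε * (3 + ε) / (1 - ε) ≤ 10 * ε := by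
    rw [div_le_iff₀ (by linarith)]
    nlinarith
  simpa only [Finset.sum_fn, Pi.smul_apply, smul_eq_mul] using
    (combine_paddings_general (by linarith) (fun k => ⟨hxnn k, hxsum k⟩) hpad (fun k => (hν k).le)
      (Finset.sum_pos (fun k _ => hν k) Finset.univ_nonempty) hlow hhigh).mono hconst
end

section
/- Let γ ∈ ℝᵐ. (a) For all y, y' ∈ Δᵐ with y entrywise positive, ⟨γ, y − y'⟩ − V_y(y') ≤ (1/2)·‖γ‖_∞², where V_y(y') = Σ_i y'_i log(y'_i/y_i) with the convention 0·log 0 = 0. (b) For every z ∈ Δᵐ, |⟨γ − clip(γ), z⟩| ≤ Σ_{i=1}^m z_i·γ_i², and moreover Σ_i z_i·(clip(γ)_i)² ≤ Σ_i z_i·γ_i², where clip(γ)_i = sign(γ_i)·min(|γ_i|, 1). -/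
/-!
For part (a), Jensen's inequality for `exp` gives the Gibbs variational inequality
`exp (⟨f, y'⟩ - V_y(y')) ≤ ∑ᵢ yᵢ exp fᵢ`. Taking `f = ⟨γ, y⟩ - γ`, the right-hand side is the
exponential moment under `y` of a centered variable with values in an interval of length `2‖γ‖_∞`,
which Hoeffding's lemma bounds by `exp (‖γ‖_∞² / 2)`. Part (b) holds coordinatewise, since
`|v - clip v| = |v| - min |v| 1`.
-/

/-- Clipping to `[-1, 1]`: `clip(v) = sign(v) · min(|v|, 1)`. -/
noncomputable def clipR (v : ℝ) : ℝ := Real.sign v * min |v| 1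

open Finset ProbabilityTheory

lemma abs_clipR (v : ℝ) : |clipR v| = min |v| 1 := by
  have h_min : 0 ≤ min |v| 1 := le_min (abs_nonneg v) zero_le_one
  rcases eq_or_ne v 0 with rfl | hv
  · simp [clipR]
  · rcases Real.sign_apply_eq_of_ne_zero v hv with h | h <;>
      simp [clipR, h, abs_of_nonneg h_min]

lemma clipR_sq_le_sq (v : ℝ) : clipR v ^ 2 ≤ v ^ 2 :=
  sq_le_sq.mpr (abs_clipR v ▸ min_le_left |v| 1)

lemma abs_sub_clipR (v : ℝ) : |v - clipR v| = |v| - min |v| 1 := by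
  have h_nonneg : 0 ≤ |v| - min |v| 1 := sub_nonneg.mpr (min_le_left |v| 1)
  rcases lt_trichotomy v 0 with hv | rfl | hv
  · calc |v - clipR v| = |-(|v| - min |v| 1)| := by
          rw [clipR, Real.sign_of_neg hv, abs_of_neg hv]
          ring_nf
      _ = |v| - min |v| 1 := by rw [abs_neg, abs_of_nonneg h_nonneg]
  · simp [clipR]
  · calc |v - clipR v| = |(|v| - min |v| 1)| := by
          rw [clipR, Real.sign_of_pos hv, one_mul, abs_of_pos hv]
      _ = |v| - min |v| 1 := abs_of_nonneg h_nonneg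

lemma abs_sub_clipR_le_sq (v : ℝ) : |v - clipR v| ≤ v ^ 2 := by
  rw [abs_sub_clipR, ← sq_abs]
  rcases le_total |v| 1 with h | h
  · rw [min_eq_left h, sub_self]
    positivity
  · rw [min_eq_right h]
    nlinarith

section WeightedSums

variable {ι : Type*} {s : Finset ι} {z : ι → ℝ}

lemma abs_sum_sub_clipR_mul_le (γ : ι → ℝ) (hz : ∀ i ∈ s, 0 ≤ z i) :
    |∑ i ∈ s, (γ i - clipR (γ i)) * z i| ≤ ∑ i ∈ s, z i * γ i ^ 2 := by
  refine (abs_sum_le_sum_abs _ s).trans (sum_le_sum fun i hi => ?_)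
  rw [abs_mul, abs_of_nonneg (hz i hi), mul_comm]
  exact mul_le_mul_of_nonneg_left (abs_sub_clipR_le_sq (γ i)) (hz i hi)

lemma sum_mul_clipR_sq_le (γ : ι → ℝ) (hz : ∀ i ∈ s, 0 ≤ z i) :
    ∑ i ∈ s, z i * clipR (γ i) ^ 2 ≤ ∑ i ∈ s, z i * γ i ^ 2 :=
  sum_le_sum fun i hi => mul_le_mul_of_nonneg_left (clipR_sq_le_sq (γ i)) (hz i hi)

end WeightedSums

section Entropy

variable {ι : Type*} [Fintype ι] {y y' f : ι → ℝ} {a b : ℝ}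

/-- The entropy Bregman divergence `V_y(y')`, that is, the Kullback–Leibler divergence of `y'`
from `y`. It has its usual meaning only when `y'` vanishes wherever `y` does: a coordinate with
`y i = 0` contributes `0` rather than `∞`. -/
noncomputable def entropyBregman (y y' : ι → ℝ) : ℝ :=
  ∑ i, y' i * Real.log (y' i / y i)

lemma exp_sum_mul_sub_entropyBregman_le (f : ι → ℝ) (hy : ∀ i, 0 ≤ y i)
    (hy' : y' ∈ stdSimplex ℝ ι) (hac : ∀ i, y i = 0 → y' i = 0) :
    Real.exp (∑ i, y' i * f i - entropyBregman y y') ≤ ∑ i, y i * Real.exp (f i) := by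
  have change_of_weight (i : ι) :
      y' i * Real.exp (f i - Real.log (y' i / y i)) ≤ y i * Real.exp (f i) := by
    rcases (hy'.1 i).eq_or_lt with h | h
    · rw [← h, zero_mul]
      exact mul_nonneg (hy i) (Real.exp_pos _).le
    · have hyi : 0 < y i := (hy i).lt_of_ne' fun h0 => h.ne' (hac i h0)
      rw [Real.exp_sub, Real.exp_log (div_pos h hyi)]
      field_simp
      exact le_rfl
  calc Real.exp (∑ i, y' i * f i - entropyBregman y y')
      = Real.exp (∑ i, y' i * (f i - Real.log (y' i / y i))) := by
        simp only [entropyBregman, mul_sub, sum_sub_distrib]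
    _ ≤ ∑ i, y' i * Real.exp (f i - Real.log (y' i / y i)) :=
        convexOn_exp.map_sum_le (fun i _ => hy'.1 i) hy'.2 fun _ _ => Set.mem_univ _
    _ ≤ ∑ i, y i * Real.exp (f i) := sum_le_sum fun i _ => change_of_weight i

lemma sum_mul_exp_sub_mean_le (hy : y ∈ stdSimplex ℝ ι) (hf : ∀ i, f i ∈ Set.Icc a b) :
    ∑ i, y i * Real.exp (f i - ∑ j, y j * f j) ≤ Real.exp ((b - a) ^ 2 / 8) := by
  let _ : MeasurableSpace ι := ⊤
  let p : PMF ι := PMF.ofFintype (fun i => ENNReal.ofReal (y i)) <| by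
    rw [← ENNReal.ofReal_sum_of_nonneg fun i _ => hy.1 i, hy.2, ENNReal.ofReal_one]
  have integral_eq (g : ι → ℝ) : ∫ i, g i ∂p.toMeasure = ∑ i, y i * g i := by
    simp only [PMF.integral_eq_sum, p, PMF.ofFintype_apply, ENNReal.toReal_ofReal (hy.1 _),
      smul_eq_mul]
  have hoeffding : HasSubgaussianMGF (fun i => f i - ∫ j, f j ∂p.toMeasure)
      ((‖b - a‖₊ / 2) ^ 2) p.toMeasure :=
    hasSubgaussianMGF_of_mem_Icc measurable_from_top.aemeasurable (.of_forall hf)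
  have parameter_eq : (‖b - a‖ / 2) ^ 2 * 1 ^ 2 / 2 = (b - a) ^ 2 / 8 := by
    rw [Real.norm_eq_abs, div_pow, sq_abs]
    ring
  have mgf_le := hoeffding.mgf_le 1
  push_cast at mgf_le
  simpa only [mgf, integral_eq, one_mul, parameter_eq] using mgf_le

lemma sum_mul_sub_sub_entropyBregman_le (hy : y ∈ stdSimplex ℝ ι) (hy' : y' ∈ stdSimplex ℝ ι)
    (hac : ∀ i, y i = 0 → y' i = 0) (hf : ∀ i, f i ∈ Set.Icc a b) :
    ∑ i, f i * (y' i - y i) - entropyBregman y y' ≤ (b - a) ^ 2 / 8 := by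
  have centering : ∑ i, f i * (y' i - y i) = ∑ i, y' i * (f i - ∑ j, y j * f j) := by
    simp only [mul_sub, sum_sub_distrib, ← sum_mul, hy'.2, one_mul, mul_comm]
  rw [← Real.exp_le_exp, centering]
  exact (exp_sum_mul_sub_entropyBregman_le _ hy.1 hy' hac).trans (sum_mul_exp_sub_mean_le hy hf)

end Entropy

theorem entropy_strong_convexity_and_clipping_general {ι : Type*} [Fintype ι] (γ : ι → ℝ) :
    (∀ y y' : ι → ℝ, y ∈ stdSimplex ℝ ι → y' ∈ stdSimplex ℝ ι → (∀ i, y i = 0 → y' i = 0) →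
      ∑ i, γ i * (y i - y' i) - entropyBregman y y' ≤ (1 / 2) * ‖γ‖ ^ 2) ∧
    (∀ z : ι → ℝ, (∀ i, 0 ≤ z i) →
      |∑ i, (γ i - clipR (γ i)) * z i| ≤ ∑ i, z i * γ i ^ 2 ∧
      ∑ i, z i * clipR (γ i) ^ 2 ≤ ∑ i, z i * γ i ^ 2) := by
  refine ⟨fun y y' hy hy' hac => ?_, fun z hz =>
    ⟨abs_sum_sub_clipR_mul_le γ fun i _ => hz i, sum_mul_clipR_sq_le γ fun i _ => hz i⟩⟩
  have neg_mem_Icc (i : ι) : -γ i ∈ Set.Icc (-‖γ‖) ‖γ‖ :=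
    abs_le.mp ((abs_neg (γ i)).trans_le (norm_le_pi_norm γ i))
  calc ∑ i, γ i * (y i - y' i) - entropyBregman y y'
      = ∑ i, -γ i * (y' i - y i) - entropyBregman y y' := by
        simp only [neg_mul, ← mul_neg, neg_sub]
    _ ≤ (‖γ‖ - -‖γ‖) ^ 2 / 8 := sum_mul_sub_sub_entropyBregman_le hy hy' hac neg_mem_Icc
    _ = (1 / 2) * ‖γ‖ ^ 2 := by ring

/-- (a) Entropy on the simplex satisfies
`⟨γ, y − y'⟩ − V_y(y') ≤ (1/2)‖γ‖_∞²`; (b) the clipping distortion bounds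
`|⟨γ − clip(γ), z⟩| ≤ ∑ᵢ zᵢ γᵢ²` and `∑ᵢ zᵢ (clip γᵢ)² ≤ ∑ᵢ zᵢ γᵢ²` hold for `z ∈ Δᵐ`. -/
theorem entropy_strong_convexity_and_clipping (m : ℕ) (γ : Fin m → ℝ) :
    (∀ y y' : Fin m → ℝ, y ∈ stdSimplex ℝ (Fin m) → y' ∈ stdSimplex ℝ (Fin m) →
      (∀ i, 0 < y i) →
      (∑ i, γ i * (y i - y' i)) - (∑ i, y' i * Real.log (y' i / y i))
        ≤ (1 / 2) * ‖γ‖ ^ 2) ∧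
    (∀ z : Fin m → ℝ, z ∈ stdSimplex ℝ (Fin m) →
      |∑ i, (γ i - clipR (γ i)) * z i| ≤ (∑ i, z i * γ i ^ 2) ∧
      (∑ i, z i * clipR (γ i) ^ 2) ≤ ∑ i, z i * γ i ^ 2) := by
  obtain ⟨entropy_le, clip_le⟩ := entropy_strong_convexity_and_clipping_general γ
  exact ⟨fun y y' hy hy' hpos => entropy_le y y' hy hy' fun i hi => absurd hi (hpos i).ne',
    fun z hz => clip_le z hz.1⟩
end

section
/- Let A ∈ ℝ^{m×n} have every row and every column nonzero. For y ∈ Δᵐ and x ∈ Δⁿ define p_{ij} = y_i · A_{ij}² / ‖A_{i:}‖₂² and q_{ij} = x_j · A_{ij}² / ‖A_{:j}‖₂². Then for every w ∈ Δⁿ and v ∈ Δᵐ: Σ_{(i,j) : p_{ij} > 0} p_{ij} · w_j · ( A_{ij}·y_i / p_{ij} )² ≤ max_{i∈[m]} ‖A_{i:}‖₂², and Σ_{(i,j) : q_{ij} > 0} q_{ij} · v_i · ( A_{ij}·x_j / q_{ij} )² ≤ max_{j∈[n]} ‖A_{:j}‖₂². (These are the local-norm second moments of the x- and y-blocks of the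 ℓ₁-ℓ₁ coordinate gradient estimator, establishing that it is a √2·L_co-local estimator with L_co = max{max_i ‖A_{i:}‖₂, max_j ‖A_{:j}‖₂}.) -/
/-!
An entry `(i, j)` is drawn with probability `p i j` proportional, within row `i`, to `A i j ^ 2`,
which makes `(A i j * y i) ^ 2 / p i j` equal to `y i * ‖A i‖²` whatever `j` is. Averaging over `j`
with the weights `w` therefore bounds the second moment by `∑ i, y i * ‖A i‖²`, a convex combination
of the squared row norms. The other block is the same estimator for `Aᵀ`.
-/

section CoordinateEstimator

open Finset

variable {ι κ 𝕜 : Type*} [Fintype κ] [Field 𝕜]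

/-- The sampling distribution on the entries of `A` that draws row `i` with probability `y i`, then
column `j` with probability `A i j ^ 2 / ‖A i‖₂²`. -/
def rowSamplingProb (A : Matrix ι κ 𝕜) (y : ι → 𝕜) (i : ι) (j : κ) : 𝕜 :=
  y i * A i j ^ 2 / ∑ l, A i l ^ 2

variable [LinearOrder 𝕜]

/-- The second moment, in the local norm with weights `w`, of the importance-sampling estimator that
draws `(i, j)` with probability `p i j` and returns `(g i j / p i j) • e_j`. The expectation runs
over the support of `p`. -/
def localSecondMoment [Fintype ι] (p g : ι → κ → 𝕜) (w : κ → 𝕜) : 𝕜 :=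
  ∑ i, ∑ j, if 0 < p i j then p i j * (w j * (g i j / p i j) ^ 2) else 0

variable [IsStrictOrderedRing 𝕜]

lemma ite_pos_mul_sq_div_le {p g w c : 𝕜} (hw : 0 ≤ w) (hc : 0 ≤ c) (hg : g ^ 2 = c * p) :
    (if 0 < p then p * (w * (g / p) ^ 2) else 0) ≤ c * w := by
  split_ifs with hp
  · refine le_of_eq ?_
    rw [div_pow, hg]
    field_simp
  · positivity

lemma localSecondMoment_le_sum [Fintype ι] {p g : ι → κ → 𝕜} {c : ι → 𝕜} {w : κ → 𝕜}
    (hc : ∀ i, 0 ≤ c i) (hg : ∀ i j, g i j ^ 2 = c i * p i j) (hw : w ∈ stdSimplex 𝕜 κ) :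
    localSecondMoment p g w ≤ ∑ i, c i :=
  calc localSecondMoment p g w
    _ ≤ ∑ i, ∑ j, c i * w j :=
      sum_le_sum fun i _ ↦ sum_le_sum fun j _ ↦ ite_pos_mul_sq_div_le (hw.1 j) (hc i) (hg i j)
    _ = ∑ i, c i := by simp only [← mul_sum, hw.2, mul_one]

lemma sq_mul_eq_mul_rowSamplingProb {A : Matrix ι κ 𝕜} {i : ι} (hA : A i ≠ 0) (y : ι → 𝕜) (j : κ) :
    (A i j * y i) ^ 2 = (y i * ∑ l, A i l ^ 2) * rowSamplingProb A y i j := by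
  have hnorm : ∑ l, A i l ^ 2 ≠ 0 := by
    simpa only [dotProduct, ← sq] using dotProduct_self_eq_zero.not.mpr hA
  rw [rowSamplingProb]
  field_simp

lemma sum_mul_le_sup'_of_mem_stdSimplex [Nonempty κ] {w : κ → 𝕜} (hw : w ∈ stdSimplex 𝕜 κ)
    (f : κ → 𝕜) : ∑ j, w j * f j ≤ univ.sup' univ_nonempty f := by
  have := centerMass_le_sup (f := f) (fun j _ ↦ hw.1 j) (hw.2 ▸ zero_lt_one)
  simpa only [centerMass_eq_of_sum_1 _ _ hw.2, smul_eq_mul] using this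

theorem l1l1_coordinate_estimator_local_moment_general [Fintype ι] [Nonempty ι] {A : Matrix ι κ 𝕜}
    (hA : ∀ i, A i ≠ 0) {y : ι → 𝕜} (hy : y ∈ stdSimplex 𝕜 ι) {w : κ → 𝕜}
    (hw : w ∈ stdSimplex 𝕜 κ) :
    localSecondMoment (rowSamplingProb A y) (fun i j ↦ A i j * y i) w ≤
      univ.sup' univ_nonempty fun i ↦ ∑ l, A i l ^ 2 :=
  calc localSecondMoment (rowSamplingProb A y) (fun i j ↦ A i j * y i) w
    _ ≤ ∑ i, y i * ∑ l, A i l ^ 2 :=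
      localSecondMoment_le_sum (fun i ↦ mul_nonneg (hy.1 i) (sum_nonneg fun _ _ ↦ sq_nonneg _))
        (fun i j ↦ sq_mul_eq_mul_rowSamplingProb (hA i) y j) hw
    _ ≤ univ.sup' univ_nonempty fun i ↦ ∑ l, A i l ^ 2 := sum_mul_le_sup'_of_mem_stdSimplex hy _

end CoordinateEstimator

/-- Local-norm second moment bounds for the ℓ₁-ℓ₁ coordinate gradient
estimator with sampling distributions `p_{ij} = yᵢ A_{ij}²/‖A_{i:}‖₂²` and
`q_{ij} = xⱼ A_{ij}²/‖A_{:j}‖₂²`. -/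
theorem l1l1_coordinate_estimator_local_moment
    (m n : ℕ) (hm : 0 < m) (hn : 0 < n)
    (A : Matrix (Fin m) (Fin n) ℝ)
    (hrow : ∀ i, A i ≠ 0) (hcol : ∀ j, A.transpose j ≠ 0)
    (y : Fin m → ℝ) (hy : y ∈ stdSimplex ℝ (Fin m))
    (x : Fin n → ℝ) (hx : x ∈ stdSimplex ℝ (Fin n))
    (p q : Fin m → Fin n → ℝ)
    (hp : ∀ i j, p i j = y i * (A i j) ^ 2 / ∑ l, (A i l) ^ 2)
    (hq : ∀ i j, q i j = x j * (A i j) ^ 2 / ∑ k, (A k j) ^ 2) :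
    (∀ w ∈ stdSimplex ℝ (Fin n),
      (∑ i, ∑ j, if 0 < p i j then p i j * (w j * (A i j * y i / p i j) ^ 2) else 0)
        ≤ Finset.univ.sup' ⟨⟨0, hm⟩, Finset.mem_univ _⟩ (fun i => ∑ l, (A i l) ^ 2)) ∧
    (∀ v ∈ stdSimplex ℝ (Fin m),
      (∑ i, ∑ j, if 0 < q i j then q i j * (v i * (A i j * x j / q i j) ^ 2) else 0)
        ≤ Finset.univ.sup' ⟨⟨0, hn⟩, Finset.mem_univ _⟩ (fun j => ∑ k, (A k j) ^ 2)) := by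
  have := Fin.pos_iff_nonempty.mp hm
  have := Fin.pos_iff_nonempty.mp hn
  obtain rfl : p = rowSamplingProb A y := funext₂ hp
  obtain rfl : q = fun i j ↦ rowSamplingProb A.transpose x j i := funext₂ hq
  refine ⟨fun w hw ↦ l1l1_coordinate_estimator_local_moment_general hrow hy hw, fun v hv ↦ ?_⟩
  rw [Finset.sum_comm]
  exact l1l1_coordinate_estimator_local_moment_general hcol hx hv
end

section
/- Let A ∈ ℝ^{m×n} be nonzero with every row nonzero, and define the oblivious distribution p_{ij} = ( ‖A_{i:}‖₁² / Σ_{k=1}^m ‖A_{k:}‖₁² ) · ( |A_{ij}| / ‖A_{i:}‖₁ ). Then for every y ∈ ℝᵐ with ‖y‖₂ ≤ 1: Σ_{(i,j) : A_{ij} ≠ 0} A_{ij}² · y_i² / p_{ij} ≤ Σ_{i=1}^m ‖A_{i:}‖₁². Symmetrically, if every column is nonzero and q_{ij} = ( ‖A_{:j}‖₁² / Σ_{k=1}^n ‖A_{:k}‖₁² ) · ( |A_{ij}| / ‖A_{:j}‖₁ ), then for every x ∈ ℝⁿ with ‖x‖₂ ≤ 1: Σ_{(i,j) : A_{ij} ≠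 0} A_{ij}² · x_j² / q_{ij} ≤ Σ_{j=1}^n ‖A_{:j}‖₁². -/
/-!
Within a row `a` that is selected with probability `w`, sampling entries proportionally to `|a j|`
turns each term `a j ^ 2 / (w * |a j| / ‖a‖₁)` of the second moment into `|a j| * ‖a‖₁ / w`, so the
row contributes `‖a‖₁ ^ 2 / w`. Taking `w` proportional to `‖a‖₁ ^ 2` makes all nonzero rows
contribute the same amount, namely the normalising constant `∑ k, ‖A k‖₁ ^ 2`; weighting the rows
by `y i ^ 2` then costs at most the factor `‖y‖₂ ^ 2`.
-/

section ObliviousSampling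

variable {ι κ K : Type*} [Fintype ι] [Fintype κ] [Field K] [LinearOrder K] [IsStrictOrderedRing K]

/-- The `ℓ₁` norm of a finite vector, as an explicit sum so that it makes sense over any ordered
field. -/
def l1Norm (a : κ → K) : K := ∑ j, |a j|

/-- The oblivious sampling distribution of a matrix: row `i` is drawn with probability proportional
to `‖A i‖₁ ^ 2`, then column `j` with probability proportional to `|A i j|`. A zero row gets
mass `0`, its second factor being `0 / 0 = 0`. -/
def obliviousProb (A : Matrix ι κ K) (i : ι) (j : κ) : K :=
  l1Norm (A i) ^ 2 / (∑ k, l1Norm (A k) ^ 2) * (|A i j| / l1Norm (A i))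

/-- The Euclidean second moment of the coordinate estimator `(A i j * y i / p i j) • e j` of `Aᵀ y`,
where `(i, j)` is drawn from `p`. The sum is restricted to the entries `A i j ≠ 0`, which are the
only ones `p` has to charge. -/
def estimatorSecondMoment (A : Matrix ι κ K) (p : ι → κ → K) (y : ι → K) : K :=
  ∑ i, ∑ j, if A i j ≠ 0 then A i j ^ 2 * y i ^ 2 / p i j else 0

theorem l1Norm_eq_zero {a : κ → K} : l1Norm a = 0 ↔ a = 0 := by
  simp [l1Norm, Finset.sum_eq_zero_iff_of_nonneg, funext_iff]

theorem sum_sq_div_mul_abs_div_l1Norm (a : κ → K) (w : K) :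
    (∑ j, if a j ≠ 0 then a j ^ 2 / (w * (|a j| / l1Norm a)) else 0) = l1Norm a ^ 2 / w := by
  have term_eq (j : κ) : (if a j ≠ 0 then a j ^ 2 / (w * (|a j| / l1Norm a)) else 0) =
      |a j| * (l1Norm a / w) := by
    split_ifs with h
    · rw [← sq_abs]
      field_simp [abs_ne_zero.mpr h]
    · simp [not_not.mp h]
  calc (∑ j, if a j ≠ 0 then a j ^ 2 / (w * (|a j| / l1Norm a)) else 0)
      = ∑ j, |a j| * (l1Norm a / w) := Finset.sum_congr rfl fun j _ ↦ term_eq j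
    _ = l1Norm a * (l1Norm a / w) := (Finset.sum_mul ..).symm
    _ = l1Norm a ^ 2 / w := by ring

theorem sum_sq_div_obliviousProb {A : Matrix ι κ K} {i : ι} (hi : A.row i ≠ 0) :
    (∑ j, if A i j ≠ 0 then A i j ^ 2 / obliviousProb A i j else 0) = ∑ k, l1Norm (A k) ^ 2 :=
  (sum_sq_div_mul_abs_div_l1Norm (A i) _).trans
    (div_div_cancel₀ (pow_ne_zero 2 (l1Norm_eq_zero.not.mpr hi)))

theorem estimatorSecondMoment_obliviousProb (A : Matrix ι κ K) (y : ι → K) :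
    estimatorSecondMoment A (obliviousProb A) y =
      (∑ i with A.row i ≠ 0, y i ^ 2) * ∑ k, l1Norm (A k) ^ 2 := by
  rw [estimatorSecondMoment, Finset.sum_filter, Finset.sum_mul]
  refine Finset.sum_congr rfl fun i _ ↦ ?_
  simp only [mul_comm (A i _ ^ 2), mul_div_assoc, ← mul_ite_zero, ← Finset.mul_sum]
  by_cases hi : A.row i = 0
  · have entry_eq_zero (j : κ) : A i j = 0 := congrFun hi j
    simp [hi, entry_eq_zero]
  · rw [if_pos hi, sum_sq_div_obliviousProb hi]

theorem l2l2_oblivious_estimator_moment_general (A : Matrix ι κ K) (y : ι → K) :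
    estimatorSecondMoment A (obliviousProb A) y ≤
      (∑ i, y i ^ 2) * ∑ i, l1Norm (A i) ^ 2 := by
  rw [estimatorSecondMoment_obliviousProb]
  gcongr
  exact Finset.filter_subset _ _

theorem estimatorSecondMoment_obliviousProb_le (A : Matrix ι κ K) {y : ι → K}
    (hy : ∑ i, y i ^ 2 ≤ 1) :
    estimatorSecondMoment A (obliviousProb A) y ≤ ∑ i, l1Norm (A i) ^ 2 :=
  (l2l2_oblivious_estimator_moment_general A y).trans (mul_le_of_le_one_left (by positivity) hy)

end ObliviousSampling

/-- Euclidean second moment bounds for the oblivious ℓ₂-ℓ₂ coordinate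
gradient estimator: with `p_{ij} = (‖A_{i:}‖₁²/∑ₖ‖A_{k:}‖₁²)·(|A_{ij}|/‖A_{i:}‖₁)` one has
`∑_{A_{ij}≠0} A_{ij}² yᵢ²/p_{ij} ≤ ∑ᵢ ‖A_{i:}‖₁²` for all `‖y‖₂ ≤ 1`, and symmetrically
for columns. -/
theorem l2l2_oblivious_estimator_moment
    (m n : ℕ) (A : Matrix (Fin m) (Fin n) ℝ) (hA : A ≠ 0)
    (p q : Fin m → Fin n → ℝ)
    (hp : ∀ i j, p i j =
      (∑ l, |A i l|) ^ 2 / (∑ k, (∑ l, |A k l|) ^ 2) * (|A i j| / ∑ l, |A i l|))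
    (hq : ∀ i j, q i j =
      (∑ k, |A k j|) ^ 2 / (∑ l, (∑ k, |A k l|) ^ 2) * (|A i j| / ∑ k, |A k j|)) :
    ((∀ i, A i ≠ 0) → ∀ y : Fin m → ℝ, (∑ i, (y i) ^ 2) ≤ 1 →
      (∑ i, ∑ j, if A i j ≠ 0 then (A i j) ^ 2 * (y i) ^ 2 / p i j else 0)
        ≤ ∑ i, (∑ l, |A i l|) ^ 2) ∧
    ((∀ j, A.transpose j ≠ 0) → ∀ x : Fin n → ℝ, (∑ j, (x j) ^ 2) ≤ 1 →
      (∑ i, ∑ j, if A i j ≠ 0 then (A i j) ^ 2 * (x j) ^ 2 / q i j else 0)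
        ≤ ∑ j, (∑ k, |A k j|) ^ 2) := by
  obtain rfl : p = obliviousProb A := funext₂ hp
  obtain rfl : q = fun i j ↦ obliviousProb A.transpose j i := funext₂ hq
  refine ⟨fun _ y hy ↦ estimatorSecondMoment_obliviousProb_le A hy, fun _ x hx ↦ ?_⟩
  rw [Finset.sum_comm]
  exact estimatorSecondMoment_obliviousProb_le A.transpose hx
end

section
/- Let A ∈ ℝ^{m×n} be a nonzero matrix with every row nonzero. For y ∈ Δᵐ define p_{ij} = y_i · |A_{ij}| / ‖A_{i:}‖₁, and define q_{ij} = A_{ij}² / ‖A‖_F². Then: (a) Σ_{(i,j) : p_{ij} > 0} A_{ij}² · y_i² / p_{ij} ≤ max_{i∈[m]} ‖A_{i:}‖₁²; and (b) for every x ∈ ℝⁿ with ‖x‖₂ ≤ 1 and every w ∈ Δᵐ, Σ_{(i,j) : A_{ij} ≠ 0} w_i · A_{ij}² · x_j² / q_{ij} ≤ ‖A‖_F². -/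
/-!
Both estimators are importance samplings whose weights cancel against the summands. In (a),
`A_{ij}² yᵢ² / p_{ij} = yᵢ ‖A_{i:}‖₁ |A_{ij}|`, so the sum over `j` is `yᵢ ‖A_{i:}‖₁²` and the whole
sum is a convex combination of the `‖A_{i:}‖₁²`. In (b), `wᵢ A_{ij}² xⱼ² / q_{ij} = wᵢ xⱼ² ‖A‖_F²`
on the support of `A`, so the sum is at most `(∑ wᵢ) ‖x‖₂² ‖A‖_F²`.
-/

section Field

variable {ι κ 𝕜 : Type*} [Fintype κ] [Field 𝕜]

/-- The sampling probabilities `p_{ij}` of the `x`-block estimator: the row `i` is drawn from `y`,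
then the column `j` proportionally to `|A_{ij}|`. Zero rows get probability `0`, as `0 / 0 = 0`. -/
def rowAbsProb [LinearOrder 𝕜] (A : Matrix ι κ 𝕜) (y : ι → 𝕜) (i : ι) (j : κ) : 𝕜 :=
  y i * (|A i j| / ∑ l, |A i l|)

/-- The sampling probabilities `q_{ij}` of the `y`-block estimator: the entry `(i, j)` is drawn
proportionally to `A_{ij}²`. -/
def entrySqProb [Fintype ι] (A : Matrix ι κ 𝕜) (i : ι) (j : κ) : 𝕜 :=
  A i j ^ 2 / ∑ k, ∑ l, A k l ^ 2

theorem sq_mul_sq_div_rowAbsProb [LinearOrder 𝕜] (A : Matrix ι κ 𝕜) (y : ι → 𝕜) (i : ι) (j : κ) :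
    A i j ^ 2 * y i ^ 2 / rowAbsProb A y i j = y i * (∑ l, |A i l|) * |A i j| := by
  rw [rowAbsProb, ← sq_abs (A i j)]
  field_simp

theorem mul_sq_mul_div_entrySqProb [Fintype ι] {A : Matrix ι κ 𝕜} {i : ι} {j : κ}
    (hA : A i j ≠ 0) (a b : 𝕜) :
    a * A i j ^ 2 * b / entrySqProb A i j = a * b * ∑ k, ∑ l, A k l ^ 2 := by
  rw [entrySqProb]
  field_simp

end Field

section OrderedField

variable {ι κ 𝕜 : Type*} [Field 𝕜] [LinearOrder 𝕜] [IsStrictOrderedRing 𝕜]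

theorem sum_mul_le_sup'_of_mem_stdSimplex_s14 [Fintype ι] [Nonempty ι] {w : ι → 𝕜}
    (hw : w ∈ stdSimplex 𝕜 ι) (f : ι → 𝕜) :
    ∑ i, w i * f i ≤ Finset.univ.sup' Finset.univ_nonempty f := by
  have h := Finset.centerMass_le_sup (s := Finset.univ) (f := f) (fun i _ => hw.1 i)
    (hw.2 ▸ zero_lt_one)
  rwa [Finset.centerMass_eq_of_sum_1 _ _ hw.2] at h

variable [Fintype κ]

theorem rowAbsProb_nonneg (A : Matrix ι κ 𝕜) {y : ι → 𝕜} {i : ι} (hy : 0 ≤ y i) (j : κ) :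
    0 ≤ rowAbsProb A y i j := by
  unfold rowAbsProb
  positivity

theorem sum_sq_mul_sq_div_rowAbsProb (A : Matrix ι κ 𝕜) {y : ι → 𝕜} {i : ι} (hy : 0 ≤ y i) :
    (∑ j, if 0 < rowAbsProb A y i j then A i j ^ 2 * y i ^ 2 / rowAbsProb A y i j else 0)
      = y i * (∑ l, |A i l|) ^ 2 := by
  -- Entries of probability zero contribute `_ / 0 = 0`, so the support condition can be dropped.
  have drop_support (j : κ) :
      (if 0 < rowAbsProb A y i j then A i j ^ 2 * y i ^ 2 / rowAbsProb A y i j else 0)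
        = A i j ^ 2 * y i ^ 2 / rowAbsProb A y i j :=
    ite_eq_left_iff.2 fun h => by
      rw [← (rowAbsProb_nonneg A hy j).eq_of_not_lt h, div_zero]
  calc
    _ = ∑ j, A i j ^ 2 * y i ^ 2 / rowAbsProb A y i j :=
      Finset.sum_congr rfl fun j _ => drop_support j
    _ = ∑ j, y i * (∑ l, |A i l|) * |A i j| :=
      Finset.sum_congr rfl fun j _ => sq_mul_sq_div_rowAbsProb A y i j
    _ = y i * (∑ l, |A i l|) ^ 2 := by rw [← Finset.mul_sum, mul_assoc, sq]

variable [Fintype ι]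

theorem sum_mul_sq_mul_sq_div_entrySqProb_le (A : Matrix ι κ 𝕜) {w : ι → 𝕜} (hw : ∀ i, 0 ≤ w i)
    (x : κ → 𝕜) :
    (∑ i, ∑ j, if A i j ≠ 0 then w i * A i j ^ 2 * x j ^ 2 / entrySqProb A i j else 0)
      ≤ (∑ i, w i) * (∑ j, x j ^ 2) * ∑ k, ∑ l, A k l ^ 2 := by
  rw [Finset.sum_mul_sum]
  simp only [Finset.sum_mul]
  refine Finset.sum_le_sum fun i _ => Finset.sum_le_sum fun j _ => ?_
  split_ifs with hA
  · exact (mul_sq_mul_div_entrySqProb hA _ _).le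
  · have := hw i
    positivity

theorem l2l1_coordinate_estimator_moment_general [Nonempty ι] (A : Matrix ι κ 𝕜) {y : ι → 𝕜}
    (hy : y ∈ stdSimplex 𝕜 ι) :
    ((∑ i, ∑ j, if 0 < rowAbsProb A y i j then A i j ^ 2 * y i ^ 2 / rowAbsProb A y i j else 0)
        ≤ Finset.univ.sup' Finset.univ_nonempty fun i => (∑ l, |A i l|) ^ 2) ∧
    (∀ x : κ → 𝕜, ∑ j, x j ^ 2 ≤ 1 → ∀ w ∈ stdSimplex 𝕜 ι,
      (∑ i, ∑ j, if A i j ≠ 0 then w i * A i j ^ 2 * x j ^ 2 / entrySqProb A i j else 0)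
        ≤ ∑ k, ∑ l, A k l ^ 2) := by
  refine ⟨?_, fun x hx w hw => ?_⟩
  · calc
      _ = ∑ i, y i * (∑ l, |A i l|) ^ 2 :=
        Finset.sum_congr rfl fun i _ => sum_sq_mul_sq_div_rowAbsProb A (hy.1 i)
      _ ≤ _ := sum_mul_le_sup'_of_mem_stdSimplex_s14 hy _
  · calc
      _ ≤ (∑ i, w i) * (∑ j, x j ^ 2) * ∑ k, ∑ l, A k l ^ 2 :=
        sum_mul_sq_mul_sq_div_entrySqProb_le A hw.1 x
      _ = (∑ j, x j ^ 2) * ∑ k, ∑ l, A k l ^ 2 := by rw [hw.2, one_mul]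
      _ ≤ ∑ k, ∑ l, A k l ^ 2 := mul_le_of_le_one_left (by positivity) hx

end OrderedField

/-- Second moment bounds for the first ℓ₂-ℓ₁ coordinate gradient
estimator, with `p_{ij} = yᵢ|A_{ij}|/‖A_{i:}‖₁` and `q_{ij} = A_{ij}²/‖A‖_F²`:
(a) `∑_{p_{ij}>0} A_{ij}² yᵢ²/p_{ij} ≤ maxᵢ ‖A_{i:}‖₁²`;
(b) for `‖x‖₂ ≤ 1` and `w ∈ Δᵐ`, `∑_{A_{ij}≠0} wᵢ A_{ij}² xⱼ²/q_{ij} ≤ ‖A‖_F²`. -/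
theorem l2l1_coordinate_estimator_moment
    (m n : ℕ) (hm : 0 < m)
    (A : Matrix (Fin m) (Fin n) ℝ) (hA : A ≠ 0) (hrow : ∀ i, A i ≠ 0)
    (y : Fin m → ℝ) (hy : y ∈ stdSimplex ℝ (Fin m))
    (p q : Fin m → Fin n → ℝ)
    (hp : ∀ i j, p i j = y i * (|A i j| / ∑ l, |A i l|))
    (hq : ∀ i j, q i j = (A i j) ^ 2 / ∑ k, ∑ l, (A k l) ^ 2) :
    ((∑ i, ∑ j, if 0 < p i j then (A i j) ^ 2 * (y i) ^ 2 / p i j else 0)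
        ≤ Finset.univ.sup' ⟨⟨0, hm⟩, Finset.mem_univ _⟩ (fun i => (∑ l, |A i l|) ^ 2)) ∧
    (∀ x : Fin n → ℝ, (∑ j, (x j) ^ 2) ≤ 1 → ∀ w ∈ stdSimplex ℝ (Fin m),
      (∑ i, ∑ j, if A i j ≠ 0 then w i * (A i j) ^ 2 * (x j) ^ 2 / q i j else 0)
        ≤ ∑ k, ∑ l, (A k l) ^ 2) := by
  obtain rfl : p = rowAbsProb A y := funext₂ hp
  obtain rfl : q = entrySqProb A := funext₂ hq
  have : Nonempty (Fin m) := ⟨⟨0, hm⟩⟩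
  exact l2l1_coordinate_estimator_moment_general A hy
end

section
/- Let n ≥ 1, λ ∈ (0,1], ε' ∈ (0, 1/10], and let b ∈ ℝⁿ satisfy λ ≤ b_i ≤ 1 for all i; let g ∈ ℝⁿ, σ̂ > 0, and σ ∈ [σ̂/2, σ̂]. Let R ≥ 4·log(2n/(λ·ε')) and let μ ∈ ℝ satisfy max_i g_i ≤ μ ≤ max_i g_i + R/(2σ̂). Let p ∈ ℕ be such that the degree-p Taylor polynomial f_p(t) = Σ_{q=0}^p t^q/q! satisfies |e^t − f_p(t)| ≤ ε'·e^t for every t ∈ [−R, 0]. Define δ̃_i := max( g_i − μ, −R/σ̂ ) for each i, and Z := e^{σμ} · Σ_{q=0}^p (σ^q/q!) · Σ_{i=1}^n b_i · (δ̃_i)^q. Then (1 − ε') · Σ_{i=1}^n b_i·e^{σ·g_i} ≤ Z ≤ (1 + 2ε') · Σ_{i=1}^n b_i·e^{σ·g_i}. -/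
/-!
After factoring out `exp (σ * μ)`, the exponents `σ * (g i - μ)` are nonpositive, and truncating
them at `-(σ * R / σhat) ≥ -R` moves them into the interval where the approximation of `exp` is
accurate. Truncation only increases each term, and adds at most `exp (-(σ * R / σhat))` to it. The
term of a maximizer of `g` is at least `lam * exp (-(σ * R / (2 * σhat)))`, which exceeds this by a
factor `lam * exp (R / 4) ≥ 2 * n / ε`, so all the truncations together cost a relative error of
at most `ε / 2`.
-/

section

open Finset Real
open scoped Nat

theorem sum_pow_div_factorial_mul_sum {ι K : Type*} [Semifield K] (s : Finset ι) (m : Finset ℕ)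
    (σ : K) (b x : ι → K) :
    ∑ q ∈ m, σ ^ q / (q ! : K) * ∑ i ∈ s, b i * x i ^ q =
      ∑ i ∈ s, b i * ∑ q ∈ m, (σ * x i) ^ q / (q ! : K) := by
  simp only [mul_sum]
  rw [sum_comm]
  refine sum_congr rfl fun i _ => sum_congr rfl fun q _ => ?_
  rw [mul_pow]
  ring

theorem abs_sum_mul_sub_sum_mul_le {ι K : Type*} [Field K] [LinearOrder K] [IsStrictOrderedRing K]
    {s : Finset ι} {b x y : ι → K} {ε : K} (hb : ∀ i ∈ s, 0 ≤ b i)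
    (hxy : ∀ i ∈ s, |x i - y i| ≤ ε * x i) :
    |∑ i ∈ s, b i * x i - ∑ i ∈ s, b i * y i| ≤ ε * ∑ i ∈ s, b i * x i := by
  rw [← sum_sub_distrib, mul_sum]
  refine (abs_sum_le_sum_abs _ _).trans (sum_le_sum fun i hi => ?_)
  rw [← mul_sub, abs_mul, abs_of_nonneg (hb i hi), mul_left_comm]
  exact mul_le_mul_of_nonneg_left (hxy i hi) (hb i hi)

theorem sum_mul_exp_eq_exp_mul_sum_mul_exp_sub {ι : Type*} (s : Finset ι) (b g : ι → ℝ)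
    (σ μ : ℝ) :
    ∑ i ∈ s, b i * exp (σ * g i) = exp (σ * μ) * ∑ i ∈ s, b i * exp (σ * (g i - μ)) := by
  rw [mul_sum]
  refine sum_congr rfl fun i _ => ?_
  rw [mul_left_comm, ← exp_add]
  ring_nf

theorem sum_mul_exp_le_sum_mul_exp_max {ι : Type*} {s : Finset ι} {b : ι → ℝ} {σ : ℝ}
    (hb : ∀ i ∈ s, 0 ≤ b i) (hσ : 0 ≤ σ) (x : ι → ℝ) (y : ℝ) :
    ∑ i ∈ s, b i * exp (σ * x i) ≤ ∑ i ∈ s, b i * exp (σ * max (x i) y) :=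
  sum_le_sum fun i hi => mul_le_mul_of_nonneg_left
    (exp_le_exp.2 (mul_le_mul_of_nonneg_left (le_max_left _ _) hσ)) (hb i hi)

theorem exp_mul_max_le_add (σ x y : ℝ) : exp (σ * max x y) ≤ exp (σ * x) + exp (σ * y) := by
  rcases max_choice x y with h | h <;> rw [h]
  · exact le_add_of_nonneg_right (exp_pos _).le
  · exact le_add_of_nonneg_left (exp_pos _).le

theorem sum_mul_exp_max_le {ι : Type*} {s : Finset ι} {b : ι → ℝ} (hb : ∀ i ∈ s, 0 ≤ b i)
    (σ : ℝ) (x : ι → ℝ) (y : ℝ) :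
    ∑ i ∈ s, b i * exp (σ * max (x i) y) ≤
      ∑ i ∈ s, b i * exp (σ * x i) + (∑ i ∈ s, b i) * exp (σ * y) := by
  rw [sum_mul, ← sum_add_distrib]
  refine sum_le_sum fun i hi => ?_
  rw [← mul_add]
  exact mul_le_mul_of_nonneg_left (exp_mul_max_le_add σ (x i) y) (hb i hi)

theorem sum_mul_approx_exp_max_bounds {ι : Type*} {s : Finset ι} {b x : ι → ℝ} {F : ℝ → ℝ}
    {σ y ε : ℝ} (hb : ∀ i ∈ s, 0 ≤ b i) (hσ : 0 ≤ σ) (hε0 : 0 ≤ ε) (hε1 : ε ≤ 1)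
    (hF : ∀ i ∈ s, |exp (σ * max (x i) y) - F (σ * max (x i) y)| ≤
      ε * exp (σ * max (x i) y))
    (hy : (∑ i ∈ s, b i) * exp (σ * y) ≤ ε / 2 * ∑ i ∈ s, b i * exp (σ * x i)) :
    (1 - ε) * ∑ i ∈ s, b i * exp (σ * x i) ≤ ∑ i ∈ s, b i * F (σ * max (x i) y) ∧
      ∑ i ∈ s, b i * F (σ * max (x i) y) ≤ (1 + 2 * ε) * ∑ i ∈ s, b i * exp (σ * x i) := by
  have h_approx := abs_le.1 (abs_sum_mul_sub_sum_mul_le hb hF)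
  have h_lower := sum_mul_exp_le_sum_mul_exp_max hb hσ x y
  have h_upper := sum_mul_exp_max_le hb σ x y
  have h_nonneg : 0 ≤ ∑ i ∈ s, b i * exp (σ * x i) :=
    sum_nonneg fun i hi => mul_nonneg (hb i hi) (exp_pos _).le
  set S := ∑ i ∈ s, b i * exp (σ * x i)
  set E := ∑ i ∈ s, b i * exp (σ * max (x i) y)
  constructor
  · calc (1 - ε) * S ≤ (1 - ε) * E := mul_le_mul_of_nonneg_left h_lower (sub_nonneg.2 hε1)
      _ ≤ _ := by linarith
  · calc _ ≤ (1 + ε) * E := by linarith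
      _ ≤ (1 + ε) * ((1 + ε / 2) * S) := by gcongr; linarith
      _ = (1 + ε) * (1 + ε / 2) * S := by ring
      _ ≤ (1 + 2 * ε) * S := by gcongr; nlinarith

theorem mul_max_neg_div_mem_Icc {K : Type*} [Field K] [LinearOrder K] [IsStrictOrderedRing K]
    {σ τ R x : K} (hσ : 0 ≤ σ) (hτ : 0 < τ) (hστ : σ ≤ τ) (hR : 0 ≤ R) (hx : x ≤ 0) :
    σ * max x (-(R / τ)) ∈ Set.Icc (-R) 0 := by
  have hRτ : 0 ≤ R / τ := div_nonneg hR hτ.le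
  refine ⟨?_, mul_nonpos_of_nonneg_of_nonpos hσ (max_le hx (neg_nonpos.2 hRτ))⟩
  calc -R = τ * -(R / τ) := by field_simp
    _ ≤ σ * -(R / τ) := mul_le_mul_of_nonpos_right hστ (neg_nonpos.2 hRτ)
    _ ≤ σ * max x (-(R / τ)) := mul_le_mul_of_nonneg_left (le_max_right _ _) hσ

theorem exp_neg_le_inv_of_log_le {a r : ℝ} (ha : 0 < a) (h : log a ≤ r) : exp (-r) ≤ a⁻¹ := by
  rw [exp_neg]
  exact inv_anti₀ ha ((log_le_iff_le_exp ha).1 h)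

theorem exp_mul_neg_div_le {σ τ R x : ℝ} (hτ : 0 < τ) (hτσ : τ / 2 ≤ σ) (hR : 0 ≤ R)
    (hx : -(R / (2 * τ)) ≤ x) :
    exp (σ * -(R / τ)) ≤ exp (-(R / 4)) * exp (σ * x) := by
  have hRτ : 0 ≤ R / (2 * τ) := by positivity
  have h_quarter : R / 4 ≤ σ * (R / (2 * τ)) :=
    calc R / 4 = τ / 2 * (R / (2 * τ)) := by field_simp; norm_num
      _ ≤ σ * (R / (2 * τ)) := mul_le_mul_of_nonneg_right hτσ hRτ
  have h_half : σ * -(R / (2 * τ)) ≤ σ * x := mul_le_mul_of_nonneg_left hx (by linarith)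
  rw [← exp_add, exp_le_exp]
  calc σ * -(R / τ) = -(σ * (R / (2 * τ))) + σ * -(R / (2 * τ)) := by field_simp; ring
    _ ≤ -(R / 4) + σ * x := by linarith

theorem sum_mul_exp_neg_div_le {ι : Type*} {s : Finset ι} {b x : ι → ℝ} {lam ε σ τ R : ℝ} {k : ι}
    (hk : k ∈ s) (hlam : 0 < lam) (hε : 0 < ε) (hb : ∀ i ∈ s, lam ≤ b i ∧ b i ≤ 1)
    (hτ : 0 < τ) (hτσ : τ / 2 ≤ σ) (hR0 : 0 ≤ R) (hR : 4 * log (2 * #s / (lam * ε)) ≤ R)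
    (hx : -(R / (2 * τ)) ≤ x k) :
    (∑ i ∈ s, b i) * exp (σ * -(R / τ)) ≤ ε / 2 * ∑ i ∈ s, b i * exp (σ * x i) := by
  have h_card : (0 : ℝ) < #s := by exact_mod_cast card_pos.2 ⟨k, hk⟩
  have h_sum : ∑ i ∈ s, b i ≤ #s := by
    simpa only [nsmul_eq_mul, mul_one] using sum_le_card_nsmul s b 1 fun i hi => (hb i hi).2
  have h_quarter : exp (-(R / 4)) ≤ (2 * #s / (lam * ε))⁻¹ :=
    exp_neg_le_inv_of_log_le (by positivity) (by linarith)
  have h_term : lam * exp (σ * x k) ≤ ∑ i ∈ s, b i * exp (σ * x i) :=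
    (mul_le_mul_of_nonneg_right (hb k hk).1 (exp_pos _).le).trans <|
      single_le_sum (f := fun i => b i * exp (σ * x i))
        (fun i hi => mul_nonneg (hlam.le.trans (hb i hi).1) (exp_pos _).le) hk
  calc (∑ i ∈ s, b i) * exp (σ * -(R / τ))
      ≤ #s * ((2 * #s / (lam * ε))⁻¹ * exp (σ * x k)) := by
        gcongr
        exact (exp_mul_neg_div_le hτ hτσ hR0 hx).trans (by gcongr)
    _ = ε / 2 * (lam * exp (σ * x k)) := by field_simp
    _ ≤ ε / 2 * ∑ i ∈ s, b i * exp (σ * x i) := by gcongr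

theorem scale_maintainer_taylor_correct_general {ι : Type*} {s : Finset ι} (hs : s.Nonempty)
    {lam ε : ℝ} (hlam : 0 < lam) (hε0 : 0 < ε) (hε1 : ε ≤ 1)
    {b g : ι → ℝ} (hb : ∀ i ∈ s, lam ≤ b i ∧ b i ≤ 1)
    {σhat σ : ℝ} (hσhat : 0 < σhat) (hσlo : σhat / 2 ≤ σ) (hσhi : σ ≤ σhat)
    {R : ℝ} (hR : 4 * log (2 * #s / (lam * ε)) ≤ R)
    {μ : ℝ} (hμlo : s.sup' hs g ≤ μ) (hμhi : μ ≤ s.sup' hs g + R / (2 * σhat))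
    {F : ℝ → ℝ} (hF : ∀ t ∈ Set.Icc (-R) 0, |exp t - F t| ≤ ε * exp t) :
    (1 - ε) * ∑ i ∈ s, b i * exp (σ * g i) ≤
        exp (σ * μ) * ∑ i ∈ s, b i * F (σ * max (g i - μ) (-(R / σhat))) ∧
      exp (σ * μ) * ∑ i ∈ s, b i * F (σ * max (g i - μ) (-(R / σhat))) ≤
        (1 + 2 * ε) * ∑ i ∈ s, b i * exp (σ * g i) := by
  have hσ : 0 ≤ σ := by linarith
  have hR0 : 0 ≤ R := by
    have h : 0 ≤ R / (2 * σhat) := by linarith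
    rwa [le_div_iff₀ (by positivity), zero_mul] at h
  have h_nonpos : ∀ i ∈ s, g i - μ ≤ 0 := fun i hi =>
    sub_nonpos.2 ((le_sup' g hi).trans hμlo)
  obtain ⟨k, hk, hk_max⟩ := exists_mem_eq_sup' hs g
  have h_tail := sum_mul_exp_neg_div_le (x := fun i => g i - μ) hk hlam hε0 hb hσhat hσlo hR0 hR
    (by linarith)
  obtain ⟨h_lower, h_upper⟩ := sum_mul_approx_exp_max_bounds
    (fun i hi => hlam.le.trans (hb i hi).1) hσ hε0.le hε1
    (fun i hi => hF _ (mul_max_neg_div_mem_Icc hσ hσhat hσhi hR0 (h_nonpos i hi))) h_tail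
  rw [sum_mul_exp_eq_exp_mul_sum_mul_exp_sub s b g σ μ, mul_left_comm (1 - ε),
    mul_left_comm (1 + 2 * ε)]
  exact ⟨mul_le_mul_of_nonneg_left h_lower (exp_pos _).le,
    mul_le_mul_of_nonneg_left h_upper (exp_pos _).le⟩

end

/-- Correctness of the truncated-shifted Taylor approximation of the
normalization factor in the `ScaleMaintainer` data structure: with
`δ̃ᵢ = max(gᵢ − μ, −R/σ̂)` and `Z = e^{σμ} ∑_{q=0}^p (σ^q/q!) ∑ᵢ bᵢ δ̃ᵢ^q`, one has
`(1 − ε')·∑ᵢ bᵢ e^{σgᵢ} ≤ Z ≤ (1 + 2ε')·∑ᵢ bᵢ e^{σgᵢ}`. -/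
theorem scale_maintainer_taylor_correct
    (n : ℕ) (hn : 0 < n) (lam ε' : ℝ)
    (hlam0 : 0 < lam) (hlam1 : lam ≤ 1) (hε'0 : 0 < ε') (hε' : ε' ≤ 1 / 10)
    (b : Fin n → ℝ) (hb : ∀ i, lam ≤ b i ∧ b i ≤ 1)
    (g : Fin n → ℝ) (σhat σ : ℝ) (hσhat : 0 < σhat)
    (hσlo : σhat / 2 ≤ σ) (hσhi : σ ≤ σhat)
    (R : ℝ) (hR : 4 * Real.log (2 * n / (lam * ε')) ≤ R)
    (μ : ℝ)
    (hμlo : Finset.univ.sup' ⟨⟨0, hn⟩, Finset.mem_univ _⟩ g ≤ μ)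
    (hμhi : μ ≤ Finset.univ.sup' ⟨⟨0, hn⟩, Finset.mem_univ _⟩ g + R / (2 * σhat))
    (p : ℕ)
    (htaylor : ∀ t ∈ Set.Icc (-R) (0 : ℝ),
      |Real.exp t - ∑ q ∈ Finset.range (p + 1), t ^ q / (Nat.factorial q : ℝ)|
        ≤ ε' * Real.exp t)
    (δt : Fin n → ℝ) (hδt : ∀ i, δt i = max (g i - μ) (-(R / σhat)))
    (Z : ℝ)
    (hZ : Z = Real.exp (σ * μ) *
      ∑ q ∈ Finset.range (p + 1), σ ^ q / (Nat.factorial q : ℝ) * ∑ i, b i * δt i ^ q) :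
    (1 - ε') * (∑ i, b i * Real.exp (σ * g i)) ≤ Z ∧
      Z ≤ (1 + 2 * ε') * ∑ i, b i * Real.exp (σ * g i) := by
  simp only [hZ, hδt, sum_pow_div_factorial_mul_sum]
  exact scale_maintainer_taylor_correct_general _ hlam0 hε'0 (by linarith) (fun i _ => hb i)
    hσhat hσlo hσhi (by simpa only [Finset.card_univ, Fintype.card_fin] using hR) hμlo hμhi htaylor
end

section
/- Let A ∈ ℝ^{m×n}, b ∈ ℝᵐ, and let μ > 0 and β > 0 be such that ‖Av‖₂² ≥ μ·‖v‖₂² for every v ∈ ℝⁿ. Suppose x* ∈ ℝⁿ satisfies Aᵀ(Ax* − b) = 0, and suppose that for some x' ∈ ℝⁿ the point x*_{x'} ∈ ℝⁿ satisfies x*_{x'} = x' − (1/β²)·Aᵀ(A x*_{x'} − b). Then ‖x*_{x'} − x*‖₂ ≤ ( 1 / (1 + μ/β²) ) · ‖x' − x*‖₂. -/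
/-!
By the normal equations, `Aᵀ(Ax − b) = AᵀA(x − x*)` for every `x`. Hence the error `d = xs − x*`
satisfies `x' − x* = d + γ AᵀA d` with `γ = 1/β²`. Pairing with `d` gives
`⟪d, x' − x*⟫ = ‖d‖² + γ‖Ad‖² ≥ (1 + γμ)‖d‖²`, and Cauchy–Schwarz concludes.
-/

open scoped InnerProductSpace

section StronglyMonotone

variable {𝕜 E : Type*} [RCLike 𝕜] [NormedAddCommGroup E] [InnerProductSpace 𝕜 E]

theorem mul_norm_le_norm_of_mul_norm_sq_le_re_inner {c : ℝ} {x y : E}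
    (h : c * ‖x‖ ^ 2 ≤ RCLike.re ⟪x, y⟫_𝕜) : c * ‖x‖ ≤ ‖y‖ := by
  rcases (norm_nonneg x).eq_or_lt with hx | hx
  · simp only [← hx, mul_zero, norm_nonneg]
  · refine le_of_mul_le_mul_left ?_ hx
    calc ‖x‖ * (c * ‖x‖) = c * ‖x‖ ^ 2 := by ring
      _ ≤ RCLike.re ⟪x, y⟫_𝕜 := h
      _ ≤ ‖x‖ * ‖y‖ := re_inner_le_norm x y

theorem one_add_mul_norm_le_norm_add_smul {μ γ : ℝ} (hγ : 0 ≤ γ) {x y : E}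
    (h : μ * ‖x‖ ^ 2 ≤ RCLike.re ⟪x, y⟫_𝕜) : (1 + γ * μ) * ‖x‖ ≤ ‖x + (γ : 𝕜) • y‖ := by
  refine mul_norm_le_norm_of_mul_norm_sq_le_re_inner (𝕜 := 𝕜) ?_
  calc (1 + γ * μ) * ‖x‖ ^ 2 = ‖x‖ ^ 2 + γ * (μ * ‖x‖ ^ 2) := by ring
    _ ≤ ‖x‖ ^ 2 + γ * RCLike.re ⟪x, y⟫_𝕜 := by gcongr
    _ = RCLike.re ⟪x, x + (γ : 𝕜) • y⟫_𝕜 := by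
      rw [inner_add_right, inner_smul_right, map_add, inner_self_eq_norm_sq, RCLike.re_ofReal_mul]

end StronglyMonotone

theorem adjoint_toEuclideanLin_toLp {𝕜 m n : Type*} [RCLike 𝕜] [Fintype m] [Fintype n]
    [DecidableEq n] (A : Matrix m n 𝕜) (v : m → 𝕜) :
    A.toEuclideanLin.toContinuousLinearMap.adjoint (WithLp.toLp 2 v) =
      WithLp.toLp 2 (A.conjTranspose.mulVec v) := by
  classical
  rw [← LinearMap.adjoint_toContinuousLinearMap, ← Matrix.toEuclideanLin_conjTranspose_eq_adjoint,
    LinearMap.coe_toContinuousLinearMap', Matrix.toLpLin_toLp, Matrix.toLin'_apply]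

section LeastSquares

variable {𝕜 E F : Type*} [RCLike 𝕜]
  [NormedAddCommGroup E] [InnerProductSpace 𝕜 E] [CompleteSpace E]
  [NormedAddCommGroup F] [InnerProductSpace 𝕜 F] [CompleteSpace F]

theorem adjoint_residual_eq_of_normal_equations {A : E →L[𝕜] F} {b : F} {xstar : E}
    (hxstar : A.adjoint (A xstar - b) = 0) (x : E) :
    A.adjoint (A x - b) = A.adjoint (A (x - xstar)) := by
  rw [← sub_zero (A.adjoint (A x - b)), ← hxstar, ← map_sub, sub_sub_sub_cancel_right, map_sub A]

theorem regression_contraction_general {A : E →L[𝕜] F} {b : F} {μ γ : ℝ}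
    (hμ : 0 ≤ μ) (hγ : 0 ≤ γ) (hA : ∀ v, μ * ‖v‖ ^ 2 ≤ ‖A v‖ ^ 2)
    {xstar : E} (hxstar : A.adjoint (A xstar - b) = 0)
    {x' xs : E} (hxs : xs = x' - (γ : 𝕜) • A.adjoint (A xs - b)) :
    ‖xs - xstar‖ ≤ 1 / (1 + γ * μ) * ‖x' - xstar‖ := by
  have herror : (xs - xstar) + (γ : 𝕜) • A.adjoint (A (xs - xstar)) = x' - xstar := by
    rw [← adjoint_residual_eq_of_normal_equations hxstar, sub_add_eq_add_sub,
      eq_sub_iff_add_eq.mp hxs]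
  have hcoercive : μ * ‖xs - xstar‖ ^ 2
      ≤ RCLike.re ⟪xs - xstar, A.adjoint (A (xs - xstar))⟫_𝕜 :=
    (hA _).trans_eq (A.apply_norm_sq_eq_inner_adjoint_right _)
  rw [one_div, ← div_eq_inv_mul, le_div_iff₀' (by positivity), ← herror]
  exact one_add_mul_norm_le_norm_add_smul hγ hcoercive

end LeastSquares

/-- If `AᵀA ⪰ μI` (i.e. `‖Av‖₂² ≥ μ‖v‖₂²` for all `v`), `x*` satisfies
the regression optimality condition `Aᵀ(Ax* − b) = 0`, and `x*_{x'}` satisfies the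
regularized optimality condition `x*_{x'} = x' − (1/β²)Aᵀ(A x*_{x'} − b)`, then
`‖x*_{x'} − x*‖₂ ≤ (1/(1 + μ/β²))·‖x' − x*‖₂`. -/
theorem regression_contraction
    (m n : ℕ) (A : Matrix (Fin m) (Fin n) ℝ) (b : Fin m → ℝ)
    (μ β : ℝ) (hμ : 0 < μ) (hβ : 0 < β)
    (hA : ∀ v : Fin n → ℝ, μ * (∑ j, (v j) ^ 2) ≤ ∑ i, (A.mulVec v i) ^ 2)
    (xstar : Fin n → ℝ) (hxstar : A.transpose.mulVec (A.mulVec xstar - b) = 0)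
    (x' xs : Fin n → ℝ)
    (hxs : xs = x' - (1 / β ^ 2) • A.transpose.mulVec (A.mulVec xs - b)) :
    Real.sqrt (∑ j, (xs j - xstar j) ^ 2)
      ≤ (1 / (1 + μ / β ^ 2)) * Real.sqrt (∑ j, (x' j - xstar j) ^ 2) := by
  simpa [EuclideanSpace.norm_eq, div_eq_inv_mul] using
    regression_contraction_general (𝕜 := ℝ) (A := A.toEuclideanLin.toContinuousLinearMap)
      (b := .toLp 2 b) (xstar := .toLp 2 xstar) (x' := .toLp 2 x') (xs := .toLp 2 xs)
      hμ.le (one_div_nonneg.mpr (sq_nonneg β))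
      (fun v ↦ by simpa [EuclideanSpace.real_norm_sq_eq] using hA v.ofLp)
      (by simp [← WithLp.toLp_sub, adjoint_toEuclideanLin_toLp, hxstar])
      (by simpa [← WithLp.toLp_sub, ← WithLp.toLp_smul, adjoint_toEuclideanLin_toLp] using hxs)
end

section
/- Let m ≥ 2, n ≥ 1, ε > 0, A ∈ ℝ^{m×n}, and b ∈ ℝᵐ. Define f(x, y) = yᵀAx + yᵀb + (1/2)‖x‖₂² for x ∈ ℝⁿ and y ∈ Δᵐ, set ε' = ε/(32·log m), and define f_{ε'}(x, y) = f(x, y) − ε'·Σ_{i=1}^m y_i log y_i (with 0·log 0 = 0). Suppose (x', y') ∈ ℝⁿ × Δᵐ satisfies sup_{y ∈ Δᵐ} f_{ε'}(x', y) − inf_{x ∈ ℝⁿ} f_{ε'}(x, y') ≤ ε/16. Then sup_{y ∈ Δᵐ} f(x', y) − inf_{x ∈ ℝⁿ} f(x, y') ≤ ε/8. -/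
/-!
On the simplex `Δᵐ` the entropy `-∑ yᵢ log yᵢ` lies between `0` and `log m`, so
`f ≤ f_{ε'} ≤ f + ε' log m = f + ε/32` pointwise. A pointwise sandwich of width `δ` changes the gap
`sup_y f(x', y) - inf_x f(x, y')` by at most `δ`, and `ε/16 + ε/32 ≤ ε/8`. Since suprema and infima
of reals are used, this needs `f(x', ·)` bounded above, which holds by compactness, and `f(·, y')`
bounded below, which holds by completing the square.
-/

open Matrix Set

section Entropy

variable {ι : Type*} [Fintype ι] {p : ι → ℝ}

/-- The Shannon entropy `-∑ i, p i * log (p i)`, in nats, of a probability vector `p`. It is defined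
for all real vectors; the convention `0 * log 0 = 0` is built into `Real.negMulLog`. -/
noncomputable def shannonEntropy (p : ι → ℝ) : ℝ :=
  ∑ i, Real.negMulLog (p i)

lemma shannonEntropy_eq_neg_sum (p : ι → ℝ) :
    shannonEntropy p = -∑ i, p i * Real.log (p i) := by
  simp only [shannonEntropy, Real.negMulLog, neg_mul, Finset.sum_neg_distrib]

lemma shannonEntropy_nonneg (hp : p ∈ stdSimplex ℝ ι) : 0 ≤ shannonEntropy p :=
  Finset.sum_nonneg fun i _ =>
    Real.negMulLog_nonneg (hp.1 i) (mem_Icc_of_mem_stdSimplex hp i).2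

lemma shannonEntropy_le_log_card (hp : p ∈ stdSimplex ℝ ι) :
    shannonEntropy p ≤ Real.log (Fintype.card ι) := by
  have : Nonempty ι := by
    by_contra! h
    simpa using hp.2
  have hcard : (0 : ℝ) < Fintype.card ι := by exact_mod_cast Fintype.card_pos
  have jensen : ∑ i, (Fintype.card ι : ℝ)⁻¹ • Real.negMulLog (p i) ≤
      Real.negMulLog (∑ i, (Fintype.card ι : ℝ)⁻¹ • p i) :=
    Real.concaveOn_negMulLog.le_map_sum (fun _ _ => by positivity)
      (by simp [hcard.ne']) (fun i _ => hp.1 i)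
  rw [← Finset.smul_sum, ← Finset.smul_sum, hp.2, smul_eq_mul, smul_eq_mul, mul_one,
    Real.negMulLog, Real.log_inv, neg_mul_neg] at jensen
  exact le_of_mul_le_mul_left jensen (inv_pos.mpr hcard)

end Entropy

section SaddleGap

variable {X Y : Type*}

/-- The accuracy (duality gap) of `(x, y)` as an approximate saddle point of `f`, which is minimized
in its first and maximized in its second argument. It is meaningful only if `f x` is bounded above
and `f · y` is bounded below, because unbounded real suprema and infima are `0`. -/
noncomputable def saddleGap (f : X → Y → ℝ) (x : X) (y : Y) : ℝ :=
  (⨆ y', f x y') - ⨅ x', f x' y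

lemma saddleGap_le_saddleGap_add {f g : X → Y → ℝ} {δ : ℝ} {x : X} {y : Y}
    (hfg : ∀ x y, f x y ≤ g x y) (hgf : ∀ x y, g x y ≤ f x y + δ)
    (hx : BddAbove (range (f x))) (hy : BddBelow (range fun x' => f x' y)) :
    saddleGap f x y ≤ saddleGap g x y + δ := by
  have : Nonempty X := ⟨x⟩
  have : Nonempty Y := ⟨y⟩
  have hgx : BddAbove (range (g x)) := by
    obtain ⟨C, hC⟩ := hx
    refine ⟨C + δ, forall_mem_range.mpr fun y' => (hgf x y').trans ?_⟩
    gcongr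
    exact hC (mem_range_self y')
  have hgy : BddBelow (range fun x' => g x' y) := hy.range_mono _ fun x' => hfg x' y
  have hsup : ⨆ y', f x y' ≤ ⨆ y', g x y' := ciSup_mono hgx (hfg x)
  have hinf : (⨅ x', g x' y) - δ ≤ ⨅ x', f x' y :=
    le_ciInf fun x' => sub_le_iff_le_add.mpr ((ciInf_le hgy x').trans (hgf x' y))
  unfold saddleGap
  linarith

lemma saddleGap_le_saddleGap_add_entropy {ι : Type*} [Fintype ι]
    {f : X → stdSimplex ℝ ι → ℝ} {τ : ℝ} {x : X} {y : stdSimplex ℝ ι} (hτ : 0 ≤ τ)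
    (hx : BddAbove (range (f x))) (hy : BddBelow (range fun x' => f x' y)) :
    saddleGap f x y ≤
      saddleGap (fun x y => f x y + τ * shannonEntropy y) x y +
        τ * Real.log (Fintype.card ι) := by
  refine saddleGap_le_saddleGap_add (fun x y => ?_) (fun x y => ?_) hx hy
  · exact le_add_of_nonneg_right (mul_nonneg hτ (shannonEntropy_nonneg y.2))
  · gcongr
    exact shannonEntropy_le_log_card y.2

end SaddleGap

section MinEB

variable {ι κ : Type*} [Fintype ι] [Fintype κ]

/-- The saddle-point objective `yᵀAx + yᵀb + ½‖x‖₂²` of the minimum enclosing ball problem. The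
Euclidean norm is written as `x ⬝ᵥ x`, since the norm of `κ → ℝ` is the sup norm. -/
noncomputable def minEBObjective (A : Matrix ι κ ℝ) (b : ι → ℝ) (x : κ → ℝ) (y : ι → ℝ) : ℝ :=
  y ⬝ᵥ A *ᵥ x + y ⬝ᵥ b + 1 / 2 * (x ⬝ᵥ x)

lemma bddAbove_range_minEBObjective (A : Matrix ι κ ℝ) (b : ι → ℝ) (x : κ → ℝ) :
    BddAbove (range fun y : stdSimplex ℝ ι => minEBObjective A b x y) := by
  refine (isCompact_range ?_).bddAbove
  unfold minEBObjective
  fun_prop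

lemma neg_half_dotProduct_self_le (c x : κ → ℝ) :
    -(1 / 2 * (c ⬝ᵥ c)) ≤ c ⬝ᵥ x + 1 / 2 * (x ⬝ᵥ x) := by
  have hsq : 0 ≤ (c + x) ⬝ᵥ (c + x) := Finset.sum_nonneg fun _ _ => mul_self_nonneg _
  rw [add_dotProduct, dotProduct_add, dotProduct_add, dotProduct_comm x c] at hsq
  linarith

lemma bddBelow_range_minEBObjective (A : Matrix ι κ ℝ) (b y : ι → ℝ) :
    BddBelow (range fun x => minEBObjective A b x y) := by
  refine ⟨-(1 / 2 * (y ᵥ* A ⬝ᵥ y ᵥ* A)) + y ⬝ᵥ b, forall_mem_range.mpr fun x => ?_⟩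
  rw [minEBObjective, dotProduct_mulVec, add_right_comm]
  gcongr
  exact neg_half_dotProduct_self_le _ _

end MinEB

/-- For the Min-EB objective `f(x,y) = yᵀAx + yᵀb + ½‖x‖₂²` and its
entropy-regularized version `f_{ε'}` with `ε' = ε/(32 log m)`, an `(ε/16)`-accurate saddle
point of `f_{ε'}` is an `(ε/8)`-accurate saddle point of `f`. -/
theorem minEB_regularized_gap_transfer
    (m n : ℕ) (hm : 2 ≤ m) (ε : ℝ) (hε : 0 < ε)
    (A : Matrix (Fin m) (Fin n) ℝ) (b : Fin m → ℝ)
    (f fr : (Fin n → ℝ) → (Fin m → ℝ) → ℝ)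
    (hf : ∀ x y, f x y =
      (∑ i, y i * A.mulVec x i) + (∑ i, y i * b i) + (1 / 2) * ∑ j, (x j) ^ 2)
    (ε' : ℝ) (hε' : ε' = ε / (32 * Real.log m))
    (hfr : ∀ x y, fr x y = f x y - ε' * ∑ i, y i * Real.log (y i))
    (x' : Fin n → ℝ) (y' : Fin m → ℝ) (hy' : y' ∈ stdSimplex ℝ (Fin m))
    (hgap : (⨆ y : stdSimplex ℝ (Fin m), fr x' (y : Fin m → ℝ))
        - (⨅ x : Fin n → ℝ, fr x y') ≤ ε / 16) :
    (⨆ y : stdSimplex ℝ (Fin m), f x' (y : Fin m → ℝ))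
        - (⨅ x : Fin n → ℝ, f x y') ≤ ε / 8 := by
  have hf_eq : f = minEBObjective A b := by
    ext x y
    simp only [hf, minEBObjective, dotProduct, sq]
  have hfr_eq : fr = fun x y => f x y + ε' * shannonEntropy y := by
    ext x y
    rw [hfr, shannonEntropy_eq_neg_sum, mul_neg, sub_eq_add_neg]
  have hε'_nonneg : 0 ≤ ε' := hε' ▸ by positivity
  have hε'_log : ε' * Real.log (Fintype.card (Fin m)) = ε / 32 := by
    have hlog : 0 < Real.log m := Real.log_pos (by exact_mod_cast hm)
    rw [hε', Fintype.card_fin]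
    field_simp
  subst hf_eq hfr_eq
  let F (x : Fin n → ℝ) (y : stdSimplex ℝ (Fin m)) : ℝ := minEBObjective A b x y
  calc saddleGap F x' ⟨y', hy'⟩
      ≤ saddleGap (fun x y => F x y + ε' * shannonEntropy y) x' ⟨y', hy'⟩ +
          ε' * Real.log (Fintype.card (Fin m)) :=
        saddleGap_le_saddleGap_add_entropy hε'_nonneg
          (bddAbove_range_minEBObjective A b x') (bddBelow_range_minEBObjective A b y')
    _ ≤ ε / 16 + ε / 32 := add_le_add hgap hε'_log.le
    _ ≤ ε / 8 := by linarith
end
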